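/- For 1 ≤ i ≤ N−2, the Rouquier complexes satisfy the braid relation up to homotopy: F_i ⊗_R F_{i+1} ⊗_R F_i is homotopy equivalent, as a complex of R-bimodules, to F_{i+1} ⊗_R F_i ⊗_R F_{i+1}. -/

import Mathlib

set_option synthInstance.maxHeartbeats 1000000
set_option maxHeartbeats 1000000
set_option linter.unusedSectionVars false

/-!
STATEMENT 11: the braid relation for Rouquier complexes.  For `1 ≤ i ≤ N-2`,
the complexes of `R`-bimodules `F_i ⊗_R F_{i+1} ⊗_R F_i` and
`F_{i+1} ⊗_R F_i ⊗_R F_{i+1}` are homotopy equivalent.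

An `R`-bimodule is a module over `S = R ⊗_K R`.  Writing `s = s_i` and
`t = s_{i+1}`, the bimodules `B_s ⊗_R B_t` and `B_s ⊗_R B_t ⊗_R B_s` are
realized as `R ⊗_{R^s} (R ⊗_{R^t} R)` and `R ⊗_{R^s} (R ⊗_{R^t} (R ⊗_{R^s} R))`
via the canonical identifications `(x ⊗ y) ⊗ (z ⊗ w) ↦ x ⊗ (yz ⊗ w)` etc.,
with `S` acting through the outermost left and the innermost right factors.
(The constructions `BSg`, `BBg`, `B3g` below are stated for arbitrary
`K`-algebras `A`, `B`, `C` mapping to `R`, and are instantiated at the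
invariant subrings `R^s`, `R^t`.)  The triple tensor product complex
`F_i ⊗_R F_{i+1} ⊗_R F_i` is then realized (using the canonical unitor
identifications) as the four-term complex in degrees 3, 2, 1, 0
`B_sB_tB_s → B_sB_t × B_sB_s × B_tB_s → B_s × B_t × B_s → R`
with the Koszul-sign differentials pinned down by the formulas below, and
similarly for `F_{i+1} ⊗_R F_i ⊗_R F_{i+1}`.  The homotopy equivalence is
spelled out as a pair of chain maps together with chain homotopies in both
directions. -/

open TensorProduct MvPolynomial

noncomputable section
variable (K : Type) [Field K] [CharZero K]
variable (R : Type) [CommRing R] [Algebra K R]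

/-- The enveloping algebra `S = R ⊗_K R`; a module over it is an `R`-bimodule. -/
abbrev SEnvG := TensorProduct K R R

/-- `R` as `S`-module (the regular bimodule), via the multiplication map. -/
instance : Module (SEnvG K R) R :=
  (Algebra.TensorProduct.lmul' K (S := R)).toRingHom.toModule

variable (A : Type) [CommRing A] [Algebra K A] [Algebra A R] [IsScalarTower K A R]
variable (B : Type) [CommRing B] [Algebra K B] [Algebra B R] [IsScalarTower K B R]
variable (C : Type) [CommRing C] [Algebra K C] [Algebra C R] [IsScalarTower K C R]
variable [SMulCommClass A B R] [SMulCommClass B A R]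
variable [SMulCommClass A C R] [SMulCommClass C A R]
variable [SMulCommClass B C R] [SMulCommClass C B R]

/-- `B_A = R ⊗_A R`. -/
abbrev BSg := TensorProduct A R R

/-- The right inclusion `R → R ⊗_A R`. -/
def rIncl1 : R →ₐ[K] BSg R A :=
  Algebra.TensorProduct.includeRight.restrictScalars K

/-- The canonical map `S = R ⊗_K R → R ⊗_A R`. -/
def toBSg : SEnvG K R →ₐ[K] BSg R A :=
  Algebra.TensorProduct.productMap (R := K) (S := BSg R A)
    (Algebra.TensorProduct.includeLeft (S := K))
    (rIncl1 K R A)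

/-- `B_A` as `S`-module (`R`-bimodule). -/
instance : Module (SEnvG K R) (BSg R A) := (toBSg K R A).toRingHom.toModule

/-- `B_A ⊗_R B_B`, realized as `R ⊗_A (R ⊗_B R)`. -/
abbrev BBg := TensorProduct A R (BSg R B)

/-- The right inclusion `R ⊗_B R → R ⊗_A (R ⊗_B R)`. -/
def rIncl2 : BSg R B →ₐ[K] BBg R A B :=
  Algebra.TensorProduct.includeRight.restrictScalars K

/-- The canonical map `S = R ⊗_K R → R ⊗_A (R ⊗_B R)`. -/
def toBBg : SEnvG K R →ₐ[K] BBg R A B :=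
  Algebra.TensorProduct.productMap (R := K) (S := BBg R A B)
    (Algebra.TensorProduct.includeLeft (S := K))
    ((rIncl2 K R A B).comp (rIncl1 K R B))

/-- `B_A ⊗_R B_B` as `S`-module (`R`-bimodule). -/
instance : Module (SEnvG K R) (BBg R A B) := (toBBg K R A B).toRingHom.toModule

/-- `B_A ⊗_R B_B ⊗_R B_C`, realized as `R ⊗_A (R ⊗_B (R ⊗_C R))`. -/
abbrev B3g := TensorProduct A R (BBg R B C)

/-- The right inclusion `R ⊗_B (R ⊗_C R) → R ⊗_A (R ⊗_B (R ⊗_C R))`. -/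
def rIncl3 : BBg R B C →ₐ[K] B3g R A B C :=
  Algebra.TensorProduct.includeRight.restrictScalars K

/-- The canonical map `S = R ⊗_K R → R ⊗_A (R ⊗_B (R ⊗_C R))`. -/
def toB3g : SEnvG K R →ₐ[K] B3g R A B C :=
  Algebra.TensorProduct.productMap (R := K) (S := B3g R A B C)
    (Algebra.TensorProduct.includeLeft (S := K))
    ((rIncl3 K R A B C).comp ((rIncl2 K R B C).comp (rIncl1 K R C)))

/-- `B_A ⊗_R B_B ⊗_R B_C` as `S`-module (`R`-bimodule). -/
instance : Module (SEnvG K R) (B3g R A B C) := (toB3g K R A B C).toRingHom.toModule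

end

noncomputable section

/-- The polynomial ring `R = K[x_1, ..., x_N]`. -/
abbrev Rp (K : Type) [Field K] (N : ℕ) := MvPolynomial (Fin N) K

/-- The invariant ring `R^{s}` of the transposition `s` exchanging `x_i` and `x_j`. -/
def swapInv (K : Type) [Field K] (N : ℕ) (i j : Fin N) : Subalgebra K (Rp K N) where
  carrier := {f | rename (⇑(Equiv.swap i j)) f = f}
  mul_mem' := by
    intro a b ha hb
    simp only [Set.mem_setOf_eq, map_mul] at *
    rw [ha, hb]
  one_mem' := by simp only [Set.mem_setOf_eq, map_one]
  add_mem' := by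
    intro a b ha hb
    simp only [Set.mem_setOf_eq, map_add] at *
    rw [ha, hb]
  zero_mem' := by simp only [Set.mem_setOf_eq, map_zero]
  algebraMap_mem' := by
    intro c
    simp [Set.mem_setOf_eq, MvPolynomial.algebraMap_eq]

variable (K : Type) [Field K] [CharZero K] (N : ℕ)

/-- The enveloping algebra `S = R ⊗_K R` for `R = K[x_1, ..., x_N]`. -/
abbrev SE := SEnvG K (Rp K N)

/-- The Soergel bimodule `B_i = R ⊗_{R^{s_i}} R` (where `s_i` swaps `x_i, x_j`). -/
abbrev Bq (i j : Fin N) := BSg (Rp K N) ↥(swapInv K N i j)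

/-- The bimodule `B_s ⊗_R B_t`. -/
abbrev Bq2 (i₁ j₁ i₂ j₂ : Fin N) :=
  BBg (Rp K N) ↥(swapInv K N i₁ j₁) ↥(swapInv K N i₂ j₂)

/-- The bimodule `B_s ⊗_R B_t ⊗_R B_u`. -/
abbrev Bq3 (i₁ j₁ i₂ j₂ i₃ j₃ : Fin N) :=
  B3g (Rp K N) ↥(swapInv K N i₁ j₁) ↥(swapInv K N i₂ j₂) ↥(swapInv K N i₃ j₃)

end


noncomputable section
namespace Rouq
variable (K : Type) [Field K]
variable (R : Type) [CommRing R] [Algebra K R]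
variable (A : Type) [CommRing A] [Algebra K A] [Algebra A R] [IsScalarTower K A R]
variable (B : Type) [CommRing B] [Algebra K B] [Algebra B R] [IsScalarTower K B R]
variable (C : Type) [CommRing C] [Algebra K C] [Algebra C R] [IsScalarTower K C R]
variable [SMulCommClass A B R] [SMulCommClass B A R]
variable [SMulCommClass A C R] [SMulCommClass C A R]
variable [SMulCommClass B C R] [SMulCommClass C B R]

theorem smulR (x y m : R) : ((x ⊗ₜ[K] y : SEnvG K R) • m : R) = x * y * m := rfl

/-! ### positions -/
def p11 : R →+* BSg R A := (Algebra.TensorProduct.includeLeft (S := A) : R →ₐ[A] BSg R A).toRingHom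
def p12 : R →+* BSg R A := (Algebra.TensorProduct.includeRight : R →ₐ[A] BSg R A).toRingHom
def p21 : R →+* BBg R A B :=
  (Algebra.TensorProduct.includeLeft (S := A) : R →ₐ[A] BBg R A B).toRingHom
def i2 : BSg R B →+* BBg R A B :=
  (Algebra.TensorProduct.includeRight : BSg R B →ₐ[A] BBg R A B).toRingHom
def p22 : R →+* BBg R A B := (i2 R A B).comp (p11 R B)
def p23 : R →+* BBg R A B := (i2 R A B).comp (p12 R B)
def p31 : R →+* B3g R A B C :=
  (Algebra.TensorProduct.includeLeft (S := A) : R →ₐ[A] B3g R A B C).toRingHom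
def i3 : BBg R B C →+* B3g R A B C :=
  (Algebra.TensorProduct.includeRight : BBg R B C →ₐ[A] B3g R A B C).toRingHom
def p32 : R →+* B3g R A B C := (i3 R A B C).comp (p21 R B C)
def p33 : R →+* B3g R A B C := (i3 R A B C).comp (p22 R B C)
def p34 : R →+* B3g R A B C := (i3 R A B C).comp (p23 R B C)

theorem tm1 (x y : R) : (x ⊗ₜ[A] y : BSg R A) = p11 R A x * p12 R A y := by
  change _ = (x ⊗ₜ[A] 1 : BSg R A) * (1 ⊗ₜ[A] y)
  rw [Algebra.TensorProduct.tmul_mul_tmul, mul_one, one_mul]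

theorem tm2' (x : R) (n : BSg R B) : (x ⊗ₜ[A] n : BBg R A B) = p21 R A B x * i2 R A B n := by
  change _ = (x ⊗ₜ[A] 1 : BBg R A B) * (1 ⊗ₜ[A] n)
  rw [Algebra.TensorProduct.tmul_mul_tmul, mul_one, one_mul]

theorem tm3' (x : R) (n : BBg R B C) :
    (x ⊗ₜ[A] n : B3g R A B C) = p31 R A B C x * i3 R A B C n := by
  change _ = (x ⊗ₜ[A] 1 : B3g R A B C) * (1 ⊗ₜ[A] n)
  rw [Algebra.TensorProduct.tmul_mul_tmul, mul_one, one_mul]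

theorem tm2 (x y z : R) :
    (x ⊗ₜ[A] (y ⊗ₜ[B] z) : BBg R A B) = p21 R A B x * p22 R A B y * p23 R A B z := by
  rw [tm2', tm1, map_mul, ← mul_assoc]; rfl

theorem tm3 (x y z w : R) :
    (x ⊗ₜ[A] (y ⊗ₜ[B] (z ⊗ₜ[C] w)) : B3g R A B C)
      = p31 R A B C x * p32 R A B C y * p33 R A B C z * p34 R A B C w := by
  rw [tm3', tm2, map_mul, map_mul]
  exact (by intro a b c d; ring : ∀ a b c d : B3g R A B C, a * (b * c * d) = a * b * c * d) _ _ _ _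

theorem bal1 (a : A) : p11 R A (algebraMap A R a) = p12 R A (algebraMap A R a) := by
  change (algebraMap A R a ⊗ₜ[A] 1 : BSg R A) = 1 ⊗ₜ[A] algebraMap A R a
  rw [Algebra.algebraMap_eq_smul_one, smul_tmul]

theorem smulA1 (a : A) (n : BSg R B) : a • n = p11 R B (algebraMap A R a) * n := by
  rw [Algebra.smul_def]; rfl

theorem smulA2 (a : A) (n : BBg R B C) : a • n = p21 R B C (algebraMap A R a) * n := by
  induction n using TensorProduct.induction_on with
  | zero => rw [smul_zero, mul_zero]
  | add s t hs ht => rw [smul_add, mul_add, hs, ht]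
  | tmul u v =>
    rw [smul_tmul', tm2', tm2', Algebra.smul_def, map_mul, mul_assoc]

theorem bal2' (a : A) : p21 R A B (algebraMap A R a) = p22 R A B (algebraMap A R a) := by
  change (algebraMap A R a ⊗ₜ[A] 1 : BBg R A B) = 1 ⊗ₜ[A] (p11 R B (algebraMap A R a))
  rw [← mul_one (p11 R B (algebraMap A R a)), ← smulA1, ← smul_tmul,
    ← Algebra.algebraMap_eq_smul_one]

theorem bal2 (b : B) : p22 R A B (algebraMap B R b) = p23 R A B (algebraMap B R b) := by
  change i2 R A B _ = i2 R A B _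
  rw [bal1]

theorem bal3'' (a : A) : p31 R A B C (algebraMap A R a) = p32 R A B C (algebraMap A R a) := by
  change (algebraMap A R a ⊗ₜ[A] 1 : B3g R A B C) = 1 ⊗ₜ[A] (p21 R B C (algebraMap A R a))
  rw [← mul_one (p21 R B C (algebraMap A R a)), ← smulA2, ← smul_tmul,
    ← Algebra.algebraMap_eq_smul_one]

theorem bal3' (b : B) : p32 R A B C (algebraMap B R b) = p33 R A B C (algebraMap B R b) := by
  change i3 R A B C _ = i3 R A B C _
  rw [bal2']

theorem bal3 (c : C) : p33 R A B C (algebraMap C R c) = p34 R A B C (algebraMap C R c) := by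
  change i3 R A B C _ = i3 R A B C _
  rw [bal2]

theorem smul1 (x y : R) (m : BSg R A) :
    (x ⊗ₜ[K] y : SEnvG K R) • m = p11 R A x * p12 R A y * m := by
  change toBSg K R A (x ⊗ₜ y) * m = _
  rw [toBSg, Algebra.TensorProduct.productMap_apply_tmul]; rfl

theorem smul2 (x y : R) (m : BBg R A B) :
    (x ⊗ₜ[K] y : SEnvG K R) • m = p21 R A B x * p23 R A B y * m := by
  change toBBg K R A B (x ⊗ₜ y) * m = _
  rw [toBBg, Algebra.TensorProduct.productMap_apply_tmul]; rfl

theorem smul3 (x y : R) (m : B3g R A B C) :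
    (x ⊗ₜ[K] y : SEnvG K R) • m = p31 R A B C x * p34 R A B C y * m := by
  change toB3g K R A B C (x ⊗ₜ y) * m = _
  rw [toB3g, Algebra.TensorProduct.productMap_apply_tmul]; rfl

/-! ### building S-linear maps -/
variable {K R A B C}

def mkS {N M : Type} [AddCommGroup N] [AddCommGroup M] [Module (SEnvG K R) N]
    [Module (SEnvG K R) M] (f : N →+ M)
    (h : ∀ (x y : R) (n : N), f ((x ⊗ₜ[K] y : SEnvG K R) • n) = (x ⊗ₜ[K] y : SEnvG K R) • f n) :
    N →ₗ[SEnvG K R] M where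
  toFun := f
  map_add' := map_add f
  map_smul' := by
    intro s n
    induction s using TensorProduct.induction_on with
    | zero => simp
    | tmul x y => exact h x y n
    | add s t hs ht => simp only [add_smul, map_add, RingHom.id_apply] at *; rw [hs, ht]

/-- the additive action map `x ↦ (n ↦ (x ⊗ 1) • n)` -/
def actL (K : Type) [Field K] [Algebra K R] (M : Type) [AddCommGroup M] [Module (SEnvG K R) M] :
    R →+ M →+ M where
  toFun x := DistribSMul.toAddMonoidHom M (x ⊗ₜ[K] (1 : R) : SEnvG K R)
  map_zero' := by ext m; simp
  map_add' x y := by ext m; simp [add_tmul, add_smul]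

def actR (K : Type) [Field K] [Algebra K R] (M : Type) [AddCommGroup M] [Module (SEnvG K R) M] :
    R →+ M →+ M where
  toFun x := DistribSMul.toAddMonoidHom M ((1 : R) ⊗ₜ[K] x : SEnvG K R)
  map_zero' := by ext m; simp
  map_add' x y := by ext m; simp [tmul_add, add_smul]

theorem act_act {M : Type} [AddCommGroup M] [Module (SEnvG K R) M] (x y z w : R) (m : M) :
    (x ⊗ₜ[K] y : SEnvG K R) • (z ⊗ₜ[K] w : SEnvG K R) • m
      = ((x * z) ⊗ₜ[K] (y * w) : SEnvG K R) • m := by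
  rw [smul_smul, Algebra.TensorProduct.tmul_mul_tmul]

section
variable {M : Type} [AddCommGroup M] [Module (SEnvG K R) M]

def lift1 (ψ : R →+ M)
    (h1 : ∀ (a : A) (n : R), ψ (algebraMap A R a * n)
      = (algebraMap A R a ⊗ₜ[K] (1 : R) : SEnvG K R) • ψ n)
    (h2 : ∀ (w n : R), ψ (w * n) = ((1 : R) ⊗ₜ[K] w : SEnvG K R) • ψ n) :
    BSg R A →ₗ[SEnvG K R] M :=
  mkS (TensorProduct.liftAddHom ((AddMonoidHom.compHom.flip ψ).comp (actL K M)) (by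
      intro a x n
      change (((a • x) ⊗ₜ[K] (1 : R) : SEnvG K R)) • ψ n
        = ((x ⊗ₜ[K] (1 : R) : SEnvG K R)) • ψ (a • n)
      rw [Algebra.smul_def a n, h1, act_act, Algebra.smul_def, mul_one, mul_comm])) (by
    intro x y n
    induction n using TensorProduct.induction_on with
    | zero => simp
    | add s t hs ht => rw [smul_add, map_add, map_add, hs, ht, smul_add]
    | tmul u v =>
      have : (x ⊗ₜ[K] y : SEnvG K R) • (u ⊗ₜ[A] v : BSg R A) = (x * u) ⊗ₜ[A] (y * v) := by
        rw [smul1, tm1, tm1, map_mul, map_mul]; ring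
      rw [this]
      change (((x * u) ⊗ₜ[K] (1 : R) : SEnvG K R)) • ψ (y * v)
        = (x ⊗ₜ[K] y : SEnvG K R) • (u ⊗ₜ[K] (1 : R) : SEnvG K R) • ψ v
      rw [h2, act_act, act_act]; simp)

theorem lift1_tm (ψ : R →+ M) (h1) (h2) (x y : R) :
    lift1 (K := K) (A := A) ψ h1 h2 (x ⊗ₜ y) = (x ⊗ₜ[K] (1 : R) : SEnvG K R) • ψ y := rfl

def lift2 (ψ : BSg R B →+ M)
    (h1 : ∀ (a : A) (n : BSg R B), ψ (p11 R B (algebraMap A R a) * n)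
      = (algebraMap A R a ⊗ₜ[K] (1 : R) : SEnvG K R) • ψ n)
    (h2 : ∀ (w : R) (n : BSg R B), ψ (p12 R B w * n) = ((1 : R) ⊗ₜ[K] w : SEnvG K R) • ψ n) :
    BBg R A B →ₗ[SEnvG K R] M :=
  mkS (TensorProduct.liftAddHom ((AddMonoidHom.compHom.flip ψ).comp (actL K M)) (by
      intro a x n
      change (((a • x) ⊗ₜ[K] (1 : R) : SEnvG K R)) • ψ n
        = ((x ⊗ₜ[K] (1 : R) : SEnvG K R)) • ψ (a • n)
      rw [smulA1, h1, act_act, Algebra.smul_def, mul_one, mul_comm])) (by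
    intro x y n
    induction n using TensorProduct.induction_on with
    | zero => simp
    | add s t hs ht => rw [smul_add, map_add, map_add, hs, ht, smul_add]
    | tmul u v =>
      have : (x ⊗ₜ[K] y : SEnvG K R) • (u ⊗ₜ[A] v : BBg R A B)
          = (x * u) ⊗ₜ[A] (p12 R B y * v) := by
        rw [smul2, tm2', tm2', map_mul, map_mul]
        change _ = _ * (p23 R A B y * _)
        ring
      rw [this]
      change (((x * u) ⊗ₜ[K] (1 : R) : SEnvG K R)) • ψ (p12 R B y * v)
        = (x ⊗ₜ[K] y : SEnvG K R) • (u ⊗ₜ[K] (1 : R) : SEnvG K R) • ψ v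
      rw [h2, act_act, act_act]; simp)

theorem lift2_tm (ψ : BSg R B →+ M) (h1) (h2) (x : R) (n : BSg R B) :
    lift2 (K := K) (A := A) ψ h1 h2 (x ⊗ₜ n : BBg R A B)
      = (x ⊗ₜ[K] (1 : R) : SEnvG K R) • ψ n := rfl

def lift3 (ψ : BBg R B C →+ M)
    (h1 : ∀ (a : A) (n : BBg R B C), ψ (p21 R B C (algebraMap A R a) * n)
      = (algebraMap A R a ⊗ₜ[K] (1 : R) : SEnvG K R) • ψ n)
    (h2 : ∀ (w : R) (n : BBg R B C), ψ (p23 R B C w * n)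
      = ((1 : R) ⊗ₜ[K] w : SEnvG K R) • ψ n) :
    B3g R A B C →ₗ[SEnvG K R] M :=
  mkS (TensorProduct.liftAddHom ((AddMonoidHom.compHom.flip ψ).comp (actL K M)) (by
      intro a x n
      change (((a • x) ⊗ₜ[K] (1 : R) : SEnvG K R)) • ψ n
        = ((x ⊗ₜ[K] (1 : R) : SEnvG K R)) • ψ (a • n)
      rw [smulA2, h1, act_act, Algebra.smul_def, mul_one, mul_comm])) (by
    intro x y n
    induction n using TensorProduct.induction_on with
    | zero => simp
    | add s t hs ht => rw [smul_add, map_add, map_add, hs, ht, smul_add]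
    | tmul u v =>
      have : (x ⊗ₜ[K] y : SEnvG K R) • (u ⊗ₜ[A] v : B3g R A B C)
          = (x * u) ⊗ₜ[A] (p23 R B C y * v) := by
        rw [smul3, tm3', tm3', map_mul, map_mul]
        change _ = _ * (p34 R A B C y * _)
        ring
      rw [this]
      change (((x * u) ⊗ₜ[K] (1 : R) : SEnvG K R)) • ψ (p23 R B C y * v)
        = (x ⊗ₜ[K] y : SEnvG K R) • (u ⊗ₜ[K] (1 : R) : SEnvG K R) • ψ v
      rw [h2, act_act, act_act]; simp)

theorem lift3_tm (ψ : BBg R B C →+ M) (h1) (h2) (x : R) (n : BBg R B C) :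
    lift3 (K := K) (A := A) ψ h1 h2 (x ⊗ₜ n : B3g R A B C)
      = (x ⊗ₜ[K] (1 : R) : SEnvG K R) • ψ n := rfl

end
end Rouq
end

namespace Rouq
section abs
set_option linter.unusedSimpArgs false
variable {S : Type} [CommRing S] {Ma Mb M0 Mab Maa Mba Mbb Maba Mbab : Type}
  [AddCommGroup Ma] [AddCommGroup Mb] [AddCommGroup M0] [AddCommGroup Mab] [AddCommGroup Maa]
  [AddCommGroup Mba] [AddCommGroup Mbb] [AddCommGroup Maba] [AddCommGroup Mbab]
  [Module S Ma] [Module S Mb] [Module S M0] [Module S Mab] [Module S Maa]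
  [Module S Mba] [Module S Mbb] [Module S Maba] [Module S Mbab]

theorem ext_gen1 {M N : Type} [AddCommGroup M] [AddCommGroup N] [Module S M] [Module S N]
    {g : M} (hg : Submodule.span S {g} = ⊤) (f f' : M →ₗ[S] N) (h : f g = f' g) : f = f' :=
  LinearMap.ext_on hg (by rintro x rfl; exact h)

theorem ext_gen2 {M N : Type} [AddCommGroup M] [AddCommGroup N] [Module S M] [Module S N]
    {g g' : M} (hg : Submodule.span S {g, g'} = ⊤) (f f' : M →ₗ[S] N) (h : f g = f' g)
    (h' : f g' = f' g') : f = f' :=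
  LinearMap.ext_on hg (by
    rintro x hx
    rcases hx with rfl | hx
    · exact h
    · rw [Set.mem_singleton_iff] at hx; subst hx; exact h')

section comps
variable {M M' M'' N N' : Type} [AddCommGroup M] [AddCommGroup M'] [AddCommGroup M'']
    [AddCommGroup N] [AddCommGroup N'] [Module S M] [Module S M'] [Module S M''] [Module S N]
    [Module S N']

/-- first component of a map out of a triple product -/
def c1 (f : M × M' × M'' →ₗ[S] N) : M →ₗ[S] N := f ∘ₗ LinearMap.inl S M (M' × M'')

/-- second component of a map out of a triple product -/
def c2 (f : M × M' × M'' →ₗ[S] N) : M' →ₗ[S] N :=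
  (f ∘ₗ LinearMap.inr S M (M' × M'')) ∘ₗ LinearMap.inl S M' M''

/-- third component of a map out of a triple product -/
def c3 (f : M × M' × M'' →ₗ[S] N) : M'' →ₗ[S] N :=
  (f ∘ₗ LinearMap.inr S M (M' × M'')) ∘ₗ LinearMap.inr S M' M''

theorem ext_prod3 (f f' : M × M' × M'' →ₗ[S] N)
    (h1 : c1 f = c1 f') (h2 : c2 f = c2 f') (h3 : c3 f = c3 f') : f = f' :=
  LinearMap.prod_ext h1 (LinearMap.prod_ext h2 h3)

theorem split3 (f : M × M' × M'' →ₗ[S] N) (a : M) (b : M') (c : M'') :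
    f (a, b, c) = c1 f a + c2 f b + c3 f c := by
  change f (a, b, c) = f (a, 0, 0) + f (0, b, 0) + f (0, 0, c)
  rw [← map_add, ← map_add]; simp

theorem c1_comp (g : N →ₗ[S] N') (f : M × M' × M'' →ₗ[S] N) (x : M) :
    c1 (g ∘ₗ f) x = g (c1 f x) := rfl
theorem c2_comp (g : N →ₗ[S] N') (f : M × M' × M'' →ₗ[S] N) (x : M') :
    c2 (g ∘ₗ f) x = g (c2 f x) := rfl
theorem c3_comp (g : N →ₗ[S] N') (f : M × M' × M'' →ₗ[S] N) (x : M'') :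
    c3 (g ∘ₗ f) x = g (c3 f x) := rfl
theorem c1_add (g f : M × M' × M'' →ₗ[S] N) (x : M) : c1 (g + f) x = c1 g x + c1 f x := rfl
theorem c2_add (g f : M × M' × M'' →ₗ[S] N) (x : M') : c2 (g + f) x = c2 g x + c2 f x := rfl
theorem c3_add (g f : M × M' × M'' →ₗ[S] N) (x : M'') : c3 (g + f) x = c3 g x + c3 f x := rfl
theorem c1_zero (x : M) : c1 (0 : M × M' × M'' →ₗ[S] N) x = 0 := rfl
theorem c2_zero (x : M') : c2 (0 : M × M' × M'' →ₗ[S] N) x = 0 := rfl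
theorem c3_zero (x : M'') : c3 (0 : M × M' × M'' →ₗ[S] N) x = 0 := rfl
theorem c1_id (x : M) : c1 (LinearMap.id : M × M' × M'' →ₗ[S] _) x = (x, 0, 0) := rfl
theorem c2_id (x : M') : c2 (LinearMap.id : M × M' × M'' →ₗ[S] _) x = (0, x, 0) := rfl
theorem c3_id (x : M'') : c3 (LinearMap.id : M × M' × M'' →ₗ[S] _) x = (0, 0, x) := rfl
theorem t_zero : (0 : M × M' × M'') = (0, 0, 0) := rfl
end comps

theorem c1_coprod {M M' M'' N : Type} [AddCommGroup M] [AddCommGroup M'] [AddCommGroup M'']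
    [AddCommGroup N] [Module S M] [Module S M'] [Module S M''] [Module S N]
    (f : M →ₗ[S] N) (g : M' →ₗ[S] N) (h : M'' →ₗ[S] N) (x : M) :
    c1 (f.coprod (g.coprod h)) x = f x := by simp [c1]
theorem c2_coprod {M M' M'' N : Type} [AddCommGroup M] [AddCommGroup M'] [AddCommGroup M'']
    [AddCommGroup N] [Module S M] [Module S M'] [Module S M''] [Module S N]
    (f : M →ₗ[S] N) (g : M' →ₗ[S] N) (h : M'' →ₗ[S] N) (x : M') :
    c2 (f.coprod (g.coprod h)) x = g x := by simp [c2]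
theorem c3_coprod {M M' M'' N : Type} [AddCommGroup M] [AddCommGroup M'] [AddCommGroup M'']
    [AddCommGroup N] [Module S M] [Module S M'] [Module S M''] [Module S N]
    (f : M →ₗ[S] N) (g : M' →ₗ[S] N) (h : M'' →ₗ[S] N) (x : M'') :
    c3 (f.coprod (g.coprod h)) x = h x := by simp [c3]

theorem half (l1 l2 l3 r1 r2 r3 : S)
    {a : Ma} {b : Mb} {o : M0} {P : Mab} {Q0 Q1 : Maa} {T : Mba} {J0 : Mbb}
    {G0 G1 : Maba} {H0 : Mbab}
    (ga : Submodule.span S {a} = ⊤) (gb : Submodule.span S {b} = ⊤)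
    (gP : Submodule.span S {P} = ⊤) (gT : Submodule.span S {T} = ⊤)
    (gQ : Submodule.span S {Q0, Q1} = ⊤) (gG : Submodule.span S {G0, G1} = ⊤)
    -- relations
    (o1 : l1 • o = r1 • o)
    (ae : (l1 + l2 + l3) • a = (r1 + r2 + r3) • a)
    (b1 : l1 • b = r1 • b) (be : (l1 + l2 + l3) • b = (r1 + r2 + r3) • b)
    (Je : (l1 + l2 + l3) • J0 = (r1 + r2 + r3) • J0)
    (Pe : (l1 + l2 + l3) • P = (r1 + r2 + r3) • P)
    -- differentials
    (δ₃ : Maba →ₗ[S] Mab × Maa × Mba) (δ₂ : Mab × Maa × Mba →ₗ[S] Ma × Mb × Ma)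
    (δ₁ : Ma × Mb × Ma →ₗ[S] M0)
    (ε₃ : Mbab →ₗ[S] Mba × Mbb × Mab) (ε₂ : Mba × Mbb × Mab →ₗ[S] Mb × Ma × Mb)
    (ε₁ : Mb × Ma × Mb →ₗ[S] M0)
    (d30 : δ₃ G0 = (P, -Q0, T)) (d31 : δ₃ G1 = (r1 • P, -Q1, l1 • T))
    (d2P : c1 δ₂ P = (-a, b, 0)) (d2T : c3 δ₂ T = (0, -b, a))
    (d2Q0 : c2 δ₂ Q0 = (-a, 0, a)) (d2Q1 : c2 δ₂ Q1 = (-(r1 • a), 0, l1 • a))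
    (d1a : c1 δ₁ a = o) (d1b : c2 δ₁ b = o) (d1c : c3 δ₁ a = o)
    (e30 : ε₃ H0 = (T, -J0, P))
    (e2T : c1 ε₂ T = (-b, a, 0)) (e2P : c3 ε₂ P = (0, -a, b))
    (e2J0 : c2 ε₂ J0 = (-b, 0, b))
    (e1a : c1 ε₁ b = o) (e1b : c2 ε₁ a = o) (e1c : c3 ε₁ b = o)
    -- chain maps
    (u₃ : Maba →ₗ[S] Mbab) (u₂ : Mab × Maa × Mba →ₗ[S] Mba × Mbb × Mab)
    (u₁ : Ma × Mb × Ma →ₗ[S] Mb × Ma × Mb)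
    (v₃ : Mbab →ₗ[S] Maba) (v₂ : Mba × Mbb × Mab →ₗ[S] Mab × Maa × Mba)
    (v₁ : Mb × Ma × Mb →ₗ[S] Ma × Mb × Ma)
    (u30 : u₃ G0 = H0) (u31 : u₃ G1 = (l1 + l2 - r3) • H0)
    (u2P : c1 u₂ P = (0, -J0, P)) (u2T : c3 u₂ T = (T, 0, 0))
    (u2Q0 : c2 u₂ Q0 = (0, 0, 0))
    (u2Q1 : c2 u₂ Q1 = ((r3 - l2) • T, (r2 - l3) • J0, (l3 - r2) • P))
    (u1a : c1 u₁ a = (0, a, 0)) (u1b : c2 u₁ b = (b, 0, 0))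
    (u1c : c3 u₁ a = (0, a, 0))
    (v30 : v₃ H0 = G0)
    (v2T : c1 v₂ T = (0, -Q0, T)) (v2P : c3 v₂ P = (P, 0, 0))
    (v2J0 : c2 v₂ J0 = (0, 0, 0))
    (v1a : c1 v₁ b = (0, b, 0)) (v1b : c2 v₁ a = (a, 0, 0))
    -- homotopies
    (h₂ : Mab × Maa × Mba →ₗ[S] Maba) (h₁ : Ma × Mb × Ma →ₗ[S] Mab × Maa × Mba)
    (h2P : c1 h₂ P = 0) (h2T : c3 h₂ T = 0) (h2Q0 : c2 h₂ Q0 = 0)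
    (h2Q1 : c2 h₂ Q1 = (l1 + l2 - r3) • G0 - G1)
    (h1a : c1 h₁ a = (0, 0, 0)) (h1b : c2 h₁ b = (0, 0, 0)) (h1c : c3 h₁ a = (0, Q0, 0)) :
    (δ₂ ∘ₗ δ₃ = 0 ∧ δ₁ ∘ₗ δ₂ = 0) ∧
    (u₂ ∘ₗ δ₃ = ε₃ ∘ₗ u₃ ∧ u₁ ∘ₗ δ₂ = ε₂ ∘ₗ u₂ ∧ LinearMap.id ∘ₗ δ₁ = ε₁ ∘ₗ u₁) ∧
    (v₃ ∘ₗ u₃ + h₂ ∘ₗ δ₃ = LinearMap.id ∧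
     v₂ ∘ₗ u₂ + δ₃ ∘ₗ h₂ + h₁ ∘ₗ δ₂ = LinearMap.id ∧
     v₁ ∘ₗ u₁ + δ₂ ∘ₗ h₁ + (0 : M0 →ₗ[S] Ma × Mb × Ma) ∘ₗ δ₁ = LinearMap.id) := by
  refine ⟨⟨?_, ?_⟩, ⟨?_, ?_, ?_⟩, ?_, ?_, ?_⟩
  · refine ext_gen2 gG _ _ ?_ ?_
    · simp only [LinearMap.comp_apply, LinearMap.add_apply, LinearMap.zero_apply, LinearMap.id_apply,
        c1_comp, c2_comp, c3_comp, c1_add, c2_add, c3_add, c1_zero, c2_zero, c3_zero,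
        c1_id, c2_id, c3_id, split3, map_smul, map_neg, map_sub, map_add, map_zero, smul_neg, neg_neg,
        d30, d31, d2P, d2T, d2Q0, d2Q1, d1a, d1b, d1c, e30, e2T, e2P, e2J0, e1a, e1b, e1c,
        u30, u31, u2P, u2T, u2Q0, u2Q1, u1a, u1b, u1c, v30, v2T, v2P, v2J0, v1a, v1b,
        h2P, h2T, h2Q0, h2Q1, h1a, h1b, h1c,
        Prod.smul_mk, Prod.neg_mk, Prod.mk_add_mk, Prod.mk_sub_mk, smul_zero, neg_zero,
        add_zero, zero_add, Prod.mk.injEq, true_and, and_true, t_zero, add_neg_cancel, neg_add_cancel]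
      try (refine ⟨?_, ?_, ?_⟩)
      all_goals try module
    · simp only [LinearMap.comp_apply, LinearMap.add_apply, LinearMap.zero_apply, LinearMap.id_apply,
        c1_comp, c2_comp, c3_comp, c1_add, c2_add, c3_add, c1_zero, c2_zero, c3_zero,
        c1_id, c2_id, c3_id, split3, map_smul, map_neg, map_sub, map_add, map_zero, smul_neg, neg_neg,
        d30, d31, d2P, d2T, d2Q0, d2Q1, d1a, d1b, d1c, e30, e2T, e2P, e2J0, e1a, e1b, e1c,
        u30, u31, u2P, u2T, u2Q0, u2Q1, u1a, u1b, u1c, v30, v2T, v2P, v2J0, v1a, v1b,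
        h2P, h2T, h2Q0, h2Q1, h1a, h1b, h1c,
        Prod.smul_mk, Prod.neg_mk, Prod.mk_add_mk, Prod.mk_sub_mk, smul_zero, neg_zero,
        add_zero, zero_add, Prod.mk.injEq, true_and, and_true, t_zero, add_neg_cancel, neg_add_cancel]
      rw [b1]; module
  · refine ext_prod3 _ _ (ext_gen1 gP _ _ ?_) (ext_gen2 gQ _ _ ?_ ?_) (ext_gen1 gT _ _ ?_)
    · simp only [LinearMap.comp_apply, LinearMap.add_apply, LinearMap.zero_apply, LinearMap.id_apply,
        c1_comp, c2_comp, c3_comp, c1_add, c2_add, c3_add, c1_zero, c2_zero, c3_zero,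
        c1_id, c2_id, c3_id, split3, map_smul, map_neg, map_sub, map_add, map_zero, smul_neg, neg_neg,
        d30, d31, d2P, d2T, d2Q0, d2Q1, d1a, d1b, d1c, e30, e2T, e2P, e2J0, e1a, e1b, e1c,
        u30, u31, u2P, u2T, u2Q0, u2Q1, u1a, u1b, u1c, v30, v2T, v2P, v2J0, v1a, v1b,
        h2P, h2T, h2Q0, h2Q1, h1a, h1b, h1c,
        Prod.smul_mk, Prod.neg_mk, Prod.mk_add_mk, Prod.mk_sub_mk, smul_zero, neg_zero,
        add_zero, zero_add, Prod.mk.injEq, true_and, and_true, t_zero, add_neg_cancel, neg_add_cancel]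
      try (refine ⟨?_, ?_, ?_⟩)
      all_goals try module
    · simp only [LinearMap.comp_apply, LinearMap.add_apply, LinearMap.zero_apply, LinearMap.id_apply,
        c1_comp, c2_comp, c3_comp, c1_add, c2_add, c3_add, c1_zero, c2_zero, c3_zero,
        c1_id, c2_id, c3_id, split3, map_smul, map_neg, map_sub, map_add, map_zero, smul_neg, neg_neg,
        d30, d31, d2P, d2T, d2Q0, d2Q1, d1a, d1b, d1c, e30, e2T, e2P, e2J0, e1a, e1b, e1c,
        u30, u31, u2P, u2T, u2Q0, u2Q1, u1a, u1b, u1c, v30, v2T, v2P, v2J0, v1a, v1b,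
        h2P, h2T, h2Q0, h2Q1, h1a, h1b, h1c,
        Prod.smul_mk, Prod.neg_mk, Prod.mk_add_mk, Prod.mk_sub_mk, smul_zero, neg_zero,
        add_zero, zero_add, Prod.mk.injEq, true_and, and_true, t_zero, add_neg_cancel, neg_add_cancel]
      try (refine ⟨?_, ?_, ?_⟩)
      all_goals try module
    · simp only [LinearMap.comp_apply, LinearMap.add_apply, LinearMap.zero_apply, LinearMap.id_apply,
        c1_comp, c2_comp, c3_comp, c1_add, c2_add, c3_add, c1_zero, c2_zero, c3_zero,
        c1_id, c2_id, c3_id, split3, map_smul, map_neg, map_sub, map_add, map_zero, smul_neg, neg_neg,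
        d30, d31, d2P, d2T, d2Q0, d2Q1, d1a, d1b, d1c, e30, e2T, e2P, e2J0, e1a, e1b, e1c,
        u30, u31, u2P, u2T, u2Q0, u2Q1, u1a, u1b, u1c, v30, v2T, v2P, v2J0, v1a, v1b,
        h2P, h2T, h2Q0, h2Q1, h1a, h1b, h1c,
        Prod.smul_mk, Prod.neg_mk, Prod.mk_add_mk, Prod.mk_sub_mk, smul_zero, neg_zero,
        add_zero, zero_add, Prod.mk.injEq, true_and, and_true, t_zero, add_neg_cancel, neg_add_cancel]
      rw [o1]; module
    · simp only [LinearMap.comp_apply, LinearMap.add_apply, LinearMap.zero_apply, LinearMap.id_apply,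
        c1_comp, c2_comp, c3_comp, c1_add, c2_add, c3_add, c1_zero, c2_zero, c3_zero,
        c1_id, c2_id, c3_id, split3, map_smul, map_neg, map_sub, map_add, map_zero, smul_neg, neg_neg,
        d30, d31, d2P, d2T, d2Q0, d2Q1, d1a, d1b, d1c, e30, e2T, e2P, e2J0, e1a, e1b, e1c,
        u30, u31, u2P, u2T, u2Q0, u2Q1, u1a, u1b, u1c, v30, v2T, v2P, v2J0, v1a, v1b,
        h2P, h2T, h2Q0, h2Q1, h1a, h1b, h1c,
        Prod.smul_mk, Prod.neg_mk, Prod.mk_add_mk, Prod.mk_sub_mk, smul_zero, neg_zero,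
        add_zero, zero_add, Prod.mk.injEq, true_and, and_true, t_zero, add_neg_cancel, neg_add_cancel]
      try (refine ⟨?_, ?_, ?_⟩)
      all_goals try module
  · refine ext_gen2 gG _ _ ?_ ?_
    · simp only [LinearMap.comp_apply, LinearMap.add_apply, LinearMap.zero_apply, LinearMap.id_apply,
        c1_comp, c2_comp, c3_comp, c1_add, c2_add, c3_add, c1_zero, c2_zero, c3_zero,
        c1_id, c2_id, c3_id, split3, map_smul, map_neg, map_sub, map_add, map_zero, smul_neg, neg_neg,
        d30, d31, d2P, d2T, d2Q0, d2Q1, d1a, d1b, d1c, e30, e2T, e2P, e2J0, e1a, e1b, e1c,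
        u30, u31, u2P, u2T, u2Q0, u2Q1, u1a, u1b, u1c, v30, v2T, v2P, v2J0, v1a, v1b,
        h2P, h2T, h2Q0, h2Q1, h1a, h1b, h1c,
        Prod.smul_mk, Prod.neg_mk, Prod.mk_add_mk, Prod.mk_sub_mk, smul_zero, neg_zero,
        add_zero, zero_add, Prod.mk.injEq, true_and, and_true, t_zero, add_neg_cancel, neg_add_cancel]
      try (refine ⟨?_, ?_, ?_⟩)
      all_goals try module
    · simp only [LinearMap.comp_apply, LinearMap.add_apply, LinearMap.zero_apply, LinearMap.id_apply,
        c1_comp, c2_comp, c3_comp, c1_add, c2_add, c3_add, c1_zero, c2_zero, c3_zero,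
        c1_id, c2_id, c3_id, split3, map_smul, map_neg, map_sub, map_add, map_zero, smul_neg, neg_neg,
        d30, d31, d2P, d2T, d2Q0, d2Q1, d1a, d1b, d1c, e30, e2T, e2P, e2J0, e1a, e1b, e1c,
        u30, u31, u2P, u2T, u2Q0, u2Q1, u1a, u1b, u1c, v30, v2T, v2P, v2J0, v1a, v1b,
        h2P, h2T, h2Q0, h2Q1, h1a, h1b, h1c,
        Prod.smul_mk, Prod.neg_mk, Prod.mk_add_mk, Prod.mk_sub_mk, smul_zero, neg_zero,
        add_zero, zero_add, Prod.mk.injEq, true_and, and_true, t_zero, add_neg_cancel, neg_add_cancel]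
      refine ⟨?_, ?_, ?_⟩
      · module
      · linear_combination (norm := module) Je
      · linear_combination (norm := module) -Pe
  · refine ext_prod3 _ _ (ext_gen1 gP _ _ ?_) (ext_gen2 gQ _ _ ?_ ?_) (ext_gen1 gT _ _ ?_)
    · simp only [LinearMap.comp_apply, LinearMap.add_apply, LinearMap.zero_apply, LinearMap.id_apply,
        c1_comp, c2_comp, c3_comp, c1_add, c2_add, c3_add, c1_zero, c2_zero, c3_zero,
        c1_id, c2_id, c3_id, split3, map_smul, map_neg, map_sub, map_add, map_zero, smul_neg, neg_neg,
        d30, d31, d2P, d2T, d2Q0, d2Q1, d1a, d1b, d1c, e30, e2T, e2P, e2J0, e1a, e1b, e1c,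
        u30, u31, u2P, u2T, u2Q0, u2Q1, u1a, u1b, u1c, v30, v2T, v2P, v2J0, v1a, v1b,
        h2P, h2T, h2Q0, h2Q1, h1a, h1b, h1c,
        Prod.smul_mk, Prod.neg_mk, Prod.mk_add_mk, Prod.mk_sub_mk, smul_zero, neg_zero,
        add_zero, zero_add, Prod.mk.injEq, true_and, and_true, t_zero, add_neg_cancel, neg_add_cancel]
      try (refine ⟨?_, ?_, ?_⟩)
      all_goals try module
    · simp only [LinearMap.comp_apply, LinearMap.add_apply, LinearMap.zero_apply, LinearMap.id_apply,
        c1_comp, c2_comp, c3_comp, c1_add, c2_add, c3_add, c1_zero, c2_zero, c3_zero,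
        c1_id, c2_id, c3_id, split3, map_smul, map_neg, map_sub, map_add, map_zero, smul_neg, neg_neg,
        d30, d31, d2P, d2T, d2Q0, d2Q1, d1a, d1b, d1c, e30, e2T, e2P, e2J0, e1a, e1b, e1c,
        u30, u31, u2P, u2T, u2Q0, u2Q1, u1a, u1b, u1c, v30, v2T, v2P, v2J0, v1a, v1b,
        h2P, h2T, h2Q0, h2Q1, h1a, h1b, h1c,
        Prod.smul_mk, Prod.neg_mk, Prod.mk_add_mk, Prod.mk_sub_mk, smul_zero, neg_zero,
        add_zero, zero_add, Prod.mk.injEq, true_and, and_true, t_zero, add_neg_cancel, neg_add_cancel]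
      try (refine ⟨?_, ?_, ?_⟩)
      all_goals try module
    · simp only [LinearMap.comp_apply, LinearMap.add_apply, LinearMap.zero_apply, LinearMap.id_apply,
        c1_comp, c2_comp, c3_comp, c1_add, c2_add, c3_add, c1_zero, c2_zero, c3_zero,
        c1_id, c2_id, c3_id, split3, map_smul, map_neg, map_sub, map_add, map_zero, smul_neg, neg_neg,
        d30, d31, d2P, d2T, d2Q0, d2Q1, d1a, d1b, d1c, e30, e2T, e2P, e2J0, e1a, e1b, e1c,
        u30, u31, u2P, u2T, u2Q0, u2Q1, u1a, u1b, u1c, v30, v2T, v2P, v2J0, v1a, v1b,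
        h2P, h2T, h2Q0, h2Q1, h1a, h1b, h1c,
        Prod.smul_mk, Prod.neg_mk, Prod.mk_add_mk, Prod.mk_sub_mk, smul_zero, neg_zero,
        add_zero, zero_add, Prod.mk.injEq, true_and, and_true, t_zero, add_neg_cancel, neg_add_cancel]
      refine ⟨?_, ?_, ?_⟩
      · linear_combination (norm := module) b1 - be
      · linear_combination (norm := module) ae
      · module
    · simp only [LinearMap.comp_apply, LinearMap.add_apply, LinearMap.zero_apply, LinearMap.id_apply,
        c1_comp, c2_comp, c3_comp, c1_add, c2_add, c3_add, c1_zero, c2_zero, c3_zero,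
        c1_id, c2_id, c3_id, split3, map_smul, map_neg, map_sub, map_add, map_zero, smul_neg, neg_neg,
        d30, d31, d2P, d2T, d2Q0, d2Q1, d1a, d1b, d1c, e30, e2T, e2P, e2J0, e1a, e1b, e1c,
        u30, u31, u2P, u2T, u2Q0, u2Q1, u1a, u1b, u1c, v30, v2T, v2P, v2J0, v1a, v1b,
        h2P, h2T, h2Q0, h2Q1, h1a, h1b, h1c,
        Prod.smul_mk, Prod.neg_mk, Prod.mk_add_mk, Prod.mk_sub_mk, smul_zero, neg_zero,
        add_zero, zero_add, Prod.mk.injEq, true_and, and_true, t_zero, add_neg_cancel, neg_add_cancel]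
      try (refine ⟨?_, ?_, ?_⟩)
      all_goals try module
  · refine ext_prod3 _ _ (ext_gen1 ga _ _ ?_) (ext_gen1 gb _ _ ?_) (ext_gen1 ga _ _ ?_)
    · simp only [LinearMap.comp_apply, LinearMap.add_apply, LinearMap.zero_apply, LinearMap.id_apply,
        c1_comp, c2_comp, c3_comp, c1_add, c2_add, c3_add, c1_zero, c2_zero, c3_zero,
        c1_id, c2_id, c3_id, split3, map_smul, map_neg, map_sub, map_add, map_zero, smul_neg, neg_neg,
        d30, d31, d2P, d2T, d2Q0, d2Q1, d1a, d1b, d1c, e30, e2T, e2P, e2J0, e1a, e1b, e1c,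
        u30, u31, u2P, u2T, u2Q0, u2Q1, u1a, u1b, u1c, v30, v2T, v2P, v2J0, v1a, v1b,
        h2P, h2T, h2Q0, h2Q1, h1a, h1b, h1c,
        Prod.smul_mk, Prod.neg_mk, Prod.mk_add_mk, Prod.mk_sub_mk, smul_zero, neg_zero,
        add_zero, zero_add, Prod.mk.injEq, true_and, and_true, t_zero, add_neg_cancel, neg_add_cancel]
      try (refine ⟨?_, ?_, ?_⟩)
      all_goals try module
    · simp only [LinearMap.comp_apply, LinearMap.add_apply, LinearMap.zero_apply, LinearMap.id_apply,
        c1_comp, c2_comp, c3_comp, c1_add, c2_add, c3_add, c1_zero, c2_zero, c3_zero,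
        c1_id, c2_id, c3_id, split3, map_smul, map_neg, map_sub, map_add, map_zero, smul_neg, neg_neg,
        d30, d31, d2P, d2T, d2Q0, d2Q1, d1a, d1b, d1c, e30, e2T, e2P, e2J0, e1a, e1b, e1c,
        u30, u31, u2P, u2T, u2Q0, u2Q1, u1a, u1b, u1c, v30, v2T, v2P, v2J0, v1a, v1b,
        h2P, h2T, h2Q0, h2Q1, h1a, h1b, h1c,
        Prod.smul_mk, Prod.neg_mk, Prod.mk_add_mk, Prod.mk_sub_mk, smul_zero, neg_zero,
        add_zero, zero_add, Prod.mk.injEq, true_and, and_true, t_zero, add_neg_cancel, neg_add_cancel]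
      try (refine ⟨?_, ?_, ?_⟩)
      all_goals try module
    · simp only [LinearMap.comp_apply, LinearMap.add_apply, LinearMap.zero_apply, LinearMap.id_apply,
        c1_comp, c2_comp, c3_comp, c1_add, c2_add, c3_add, c1_zero, c2_zero, c3_zero,
        c1_id, c2_id, c3_id, split3, map_smul, map_neg, map_sub, map_add, map_zero, smul_neg, neg_neg,
        d30, d31, d2P, d2T, d2Q0, d2Q1, d1a, d1b, d1c, e30, e2T, e2P, e2J0, e1a, e1b, e1c,
        u30, u31, u2P, u2T, u2Q0, u2Q1, u1a, u1b, u1c, v30, v2T, v2P, v2J0, v1a, v1b,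
        h2P, h2T, h2Q0, h2Q1, h1a, h1b, h1c,
        Prod.smul_mk, Prod.neg_mk, Prod.mk_add_mk, Prod.mk_sub_mk, smul_zero, neg_zero,
        add_zero, zero_add, Prod.mk.injEq, true_and, and_true, t_zero, add_neg_cancel, neg_add_cancel]
      try (refine ⟨?_, ?_, ?_⟩)
      all_goals try module
  · refine ext_gen2 gG _ _ ?_ ?_
    · simp only [LinearMap.comp_apply, LinearMap.add_apply, LinearMap.zero_apply, LinearMap.id_apply,
        c1_comp, c2_comp, c3_comp, c1_add, c2_add, c3_add, c1_zero, c2_zero, c3_zero,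
        c1_id, c2_id, c3_id, split3, map_smul, map_neg, map_sub, map_add, map_zero, smul_neg, neg_neg,
        d30, d31, d2P, d2T, d2Q0, d2Q1, d1a, d1b, d1c, e30, e2T, e2P, e2J0, e1a, e1b, e1c,
        u30, u31, u2P, u2T, u2Q0, u2Q1, u1a, u1b, u1c, v30, v2T, v2P, v2J0, v1a, v1b,
        h2P, h2T, h2Q0, h2Q1, h1a, h1b, h1c,
        Prod.smul_mk, Prod.neg_mk, Prod.mk_add_mk, Prod.mk_sub_mk, smul_zero, neg_zero,
        add_zero, zero_add, Prod.mk.injEq, true_and, and_true, t_zero, add_neg_cancel, neg_add_cancel]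
      try (refine ⟨?_, ?_, ?_⟩)
      all_goals try module
    · simp only [LinearMap.comp_apply, LinearMap.add_apply, LinearMap.zero_apply, LinearMap.id_apply,
        c1_comp, c2_comp, c3_comp, c1_add, c2_add, c3_add, c1_zero, c2_zero, c3_zero,
        c1_id, c2_id, c3_id, split3, map_smul, map_neg, map_sub, map_add, map_zero, smul_neg, neg_neg,
        d30, d31, d2P, d2T, d2Q0, d2Q1, d1a, d1b, d1c, e30, e2T, e2P, e2J0, e1a, e1b, e1c,
        u30, u31, u2P, u2T, u2Q0, u2Q1, u1a, u1b, u1c, v30, v2T, v2P, v2J0, v1a, v1b,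
        h2P, h2T, h2Q0, h2Q1, h1a, h1b, h1c,
        Prod.smul_mk, Prod.neg_mk, Prod.mk_add_mk, Prod.mk_sub_mk, smul_zero, neg_zero,
        add_zero, zero_add, Prod.mk.injEq, true_and, and_true, t_zero, add_neg_cancel, neg_add_cancel]
      try (refine ⟨?_, ?_, ?_⟩)
      all_goals try module
  · refine ext_prod3 _ _ (ext_gen1 gP _ _ ?_) (ext_gen2 gQ _ _ ?_ ?_) (ext_gen1 gT _ _ ?_)
    · simp only [LinearMap.comp_apply, LinearMap.add_apply, LinearMap.zero_apply, LinearMap.id_apply,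
        c1_comp, c2_comp, c3_comp, c1_add, c2_add, c3_add, c1_zero, c2_zero, c3_zero,
        c1_id, c2_id, c3_id, split3, map_smul, map_neg, map_sub, map_add, map_zero, smul_neg, neg_neg,
        d30, d31, d2P, d2T, d2Q0, d2Q1, d1a, d1b, d1c, e30, e2T, e2P, e2J0, e1a, e1b, e1c,
        u30, u31, u2P, u2T, u2Q0, u2Q1, u1a, u1b, u1c, v30, v2T, v2P, v2J0, v1a, v1b,
        h2P, h2T, h2Q0, h2Q1, h1a, h1b, h1c,
        Prod.smul_mk, Prod.neg_mk, Prod.mk_add_mk, Prod.mk_sub_mk, smul_zero, neg_zero,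
        add_zero, zero_add, Prod.mk.injEq, true_and, and_true, t_zero, add_neg_cancel, neg_add_cancel]
      try (refine ⟨?_, ?_, ?_⟩)
      all_goals try module
    · simp only [LinearMap.comp_apply, LinearMap.add_apply, LinearMap.zero_apply, LinearMap.id_apply,
        c1_comp, c2_comp, c3_comp, c1_add, c2_add, c3_add, c1_zero, c2_zero, c3_zero,
        c1_id, c2_id, c3_id, split3, map_smul, map_neg, map_sub, map_add, map_zero, smul_neg, neg_neg,
        d30, d31, d2P, d2T, d2Q0, d2Q1, d1a, d1b, d1c, e30, e2T, e2P, e2J0, e1a, e1b, e1c,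
        u30, u31, u2P, u2T, u2Q0, u2Q1, u1a, u1b, u1c, v30, v2T, v2P, v2J0, v1a, v1b,
        h2P, h2T, h2Q0, h2Q1, h1a, h1b, h1c,
        Prod.smul_mk, Prod.neg_mk, Prod.mk_add_mk, Prod.mk_sub_mk, smul_zero, neg_zero,
        add_zero, zero_add, Prod.mk.injEq, true_and, and_true, t_zero, add_neg_cancel, neg_add_cancel]
      try (refine ⟨?_, ?_, ?_⟩)
      all_goals try module
    · simp only [LinearMap.comp_apply, LinearMap.add_apply, LinearMap.zero_apply, LinearMap.id_apply,
        c1_comp, c2_comp, c3_comp, c1_add, c2_add, c3_add, c1_zero, c2_zero, c3_zero,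
        c1_id, c2_id, c3_id, split3, map_smul, map_neg, map_sub, map_add, map_zero, smul_neg, neg_neg,
        d30, d31, d2P, d2T, d2Q0, d2Q1, d1a, d1b, d1c, e30, e2T, e2P, e2J0, e1a, e1b, e1c,
        u30, u31, u2P, u2T, u2Q0, u2Q1, u1a, u1b, u1c, v30, v2T, v2P, v2J0, v1a, v1b,
        h2P, h2T, h2Q0, h2Q1, h1a, h1b, h1c,
        Prod.smul_mk, Prod.neg_mk, Prod.mk_add_mk, Prod.mk_sub_mk, smul_zero, neg_zero,
        add_zero, zero_add, Prod.mk.injEq, true_and, and_true, t_zero, add_neg_cancel, neg_add_cancel]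
      refine ⟨?_, ?_, ?_⟩
      · linear_combination (norm := module) Pe
      · module
      · module
    · simp only [LinearMap.comp_apply, LinearMap.add_apply, LinearMap.zero_apply, LinearMap.id_apply,
        c1_comp, c2_comp, c3_comp, c1_add, c2_add, c3_add, c1_zero, c2_zero, c3_zero,
        c1_id, c2_id, c3_id, split3, map_smul, map_neg, map_sub, map_add, map_zero, smul_neg, neg_neg,
        d30, d31, d2P, d2T, d2Q0, d2Q1, d1a, d1b, d1c, e30, e2T, e2P, e2J0, e1a, e1b, e1c,
        u30, u31, u2P, u2T, u2Q0, u2Q1, u1a, u1b, u1c, v30, v2T, v2P, v2J0, v1a, v1b,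
        h2P, h2T, h2Q0, h2Q1, h1a, h1b, h1c,
        Prod.smul_mk, Prod.neg_mk, Prod.mk_add_mk, Prod.mk_sub_mk, smul_zero, neg_zero,
        add_zero, zero_add, Prod.mk.injEq, true_and, and_true, t_zero, add_neg_cancel, neg_add_cancel]
      try (refine ⟨?_, ?_, ?_⟩)
      all_goals try module
  · refine ext_prod3 _ _ (ext_gen1 ga _ _ ?_) (ext_gen1 gb _ _ ?_) (ext_gen1 ga _ _ ?_)
    · simp only [LinearMap.comp_apply, LinearMap.add_apply, LinearMap.zero_apply, LinearMap.id_apply,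
        c1_comp, c2_comp, c3_comp, c1_add, c2_add, c3_add, c1_zero, c2_zero, c3_zero,
        c1_id, c2_id, c3_id, split3, map_smul, map_neg, map_sub, map_add, map_zero, smul_neg, neg_neg,
        d30, d31, d2P, d2T, d2Q0, d2Q1, d1a, d1b, d1c, e30, e2T, e2P, e2J0, e1a, e1b, e1c,
        u30, u31, u2P, u2T, u2Q0, u2Q1, u1a, u1b, u1c, v30, v2T, v2P, v2J0, v1a, v1b,
        h2P, h2T, h2Q0, h2Q1, h1a, h1b, h1c,
        Prod.smul_mk, Prod.neg_mk, Prod.mk_add_mk, Prod.mk_sub_mk, smul_zero, neg_zero,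
        add_zero, zero_add, Prod.mk.injEq, true_and, and_true, t_zero, add_neg_cancel, neg_add_cancel]
      try (refine ⟨?_, ?_, ?_⟩)
      all_goals try module
    · simp only [LinearMap.comp_apply, LinearMap.add_apply, LinearMap.zero_apply, LinearMap.id_apply,
        c1_comp, c2_comp, c3_comp, c1_add, c2_add, c3_add, c1_zero, c2_zero, c3_zero,
        c1_id, c2_id, c3_id, split3, map_smul, map_neg, map_sub, map_add, map_zero, smul_neg, neg_neg,
        d30, d31, d2P, d2T, d2Q0, d2Q1, d1a, d1b, d1c, e30, e2T, e2P, e2J0, e1a, e1b, e1c,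
        u30, u31, u2P, u2T, u2Q0, u2Q1, u1a, u1b, u1c, v30, v2T, v2P, v2J0, v1a, v1b,
        h2P, h2T, h2Q0, h2Q1, h1a, h1b, h1c,
        Prod.smul_mk, Prod.neg_mk, Prod.mk_add_mk, Prod.mk_sub_mk, smul_zero, neg_zero,
        add_zero, zero_add, Prod.mk.injEq, true_and, and_true, t_zero, add_neg_cancel, neg_add_cancel]
      try (refine ⟨?_, ?_, ?_⟩)
      all_goals try module
    · simp only [LinearMap.comp_apply, LinearMap.add_apply, LinearMap.zero_apply, LinearMap.id_apply,
        c1_comp, c2_comp, c3_comp, c1_add, c2_add, c3_add, c1_zero, c2_zero, c3_zero,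
        c1_id, c2_id, c3_id, split3, map_smul, map_neg, map_sub, map_add, map_zero, smul_neg, neg_neg,
        d30, d31, d2P, d2T, d2Q0, d2Q1, d1a, d1b, d1c, e30, e2T, e2P, e2J0, e1a, e1b, e1c,
        u30, u31, u2P, u2T, u2Q0, u2Q1, u1a, u1b, u1c, v30, v2T, v2P, v2J0, v1a, v1b,
        h2P, h2T, h2Q0, h2Q1, h1a, h1b, h1c,
        Prod.smul_mk, Prod.neg_mk, Prod.mk_add_mk, Prod.mk_sub_mk, smul_zero, neg_zero,
        add_zero, zero_add, Prod.mk.injEq, true_and, and_true, t_zero, add_neg_cancel, neg_add_cancel]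
      try (refine ⟨?_, ?_, ?_⟩)
      all_goals try module
end abs
end Rouq

noncomputable section
namespace Rouq

/-- The data on the two invariant rings used in the proof. -/
structure Hyp (R A B : Type) [CommRing R] [CommRing A] [CommRing B] [Algebra A R] [Algebra B R]
    (x1 x2 x3 : R) where
  cA : R →ₗ[A] A
  dA : R →ₗ[A] A
  decA : ∀ f, f = algebraMap A R (cA f) + x1 * algebraMap A R (dA f)
  cA1 : cA 1 = 1
  dA1 : dA 1 = 0
  cAx : cA x1 = 0
  dAx : dA x1 = 1
  cB : R →ₗ[B] B
  dB : R →ₗ[B] B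
  decB : ∀ f, f = algebraMap B R (cB f) + x3 * algebraMap B R (dB f)
  cB1 : cB 1 = 1
  dB1 : dB 1 = 0
  cBx : cB x3 = 0
  dBx : dB x3 = 1
  sA : A
  sA_eq : algebraMap A R sA = x1 + x2
  pA : A
  pA_eq : algebraMap A R pA = x1 * x2
  xA : A
  xA_eq : algebraMap A R xA = x3
  sB : B
  sB_eq : algebraMap B R sB = x3 + x2
  pB : B
  pB_eq : algebraMap B R pB = x3 * x2
  xB : B
  xB_eq : algebraMap B R xB = x1
  gA : ∀ a : A, algebraMap A R a ∈
    Subring.closure ({x3} ∪ (Set.range (algebraMap A R) ∩ Set.range (algebraMap B R)))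
  gB : ∀ a : B, algebraMap B R a ∈
    Subring.closure ({x1} ∪ (Set.range (algebraMap B R) ∩ Set.range (algebraMap A R)))

/-- the symmetric data -/
def Hyp.swap {R A B : Type} [CommRing R] [CommRing A] [CommRing B] [Algebra A R] [Algebra B R]
    {x1 x2 x3 : R} (H : Hyp R A B x1 x2 x3) : Hyp R B A x3 x2 x1 where
  cA := H.cB
  dA := H.dB
  decA := H.decB
  cA1 := H.cB1
  dA1 := H.dB1
  cAx := H.cBx
  dAx := H.dBx
  cB := H.cA
  dB := H.dA
  decB := H.decA
  cB1 := H.cA1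
  dB1 := H.dA1
  cBx := H.cAx
  dBx := H.dAx
  sA := H.sB
  sA_eq := H.sB_eq
  pA := H.pB
  pA_eq := H.pB_eq
  xA := H.xB
  xA_eq := H.xB_eq
  sB := H.sA
  sB_eq := H.sA_eq
  pB := H.pA
  pB_eq := H.pA_eq
  xB := H.xA
  xB_eq := H.xA_eq
  gA := H.gB
  gB := H.gA

variable (K : Type) [Field K]
variable {R : Type} [CommRing R] [Algebra K R]
variable {A : Type} [CommRing A] [Algebra K A] [Algebra A R] [IsScalarTower K A R]
variable {B : Type} [CommRing B] [Algebra K B] [Algebra B R] [IsScalarTower K B R]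
variable [SMulCommClass A B R] [SMulCommClass B A R] [SMulCommClass A A R] [SMulCommClass B B R]
variable {x1 x2 x3 : R}

/-- left multiplication scalar -/
def lf (x : R) : SEnvG K R := x ⊗ₜ[K] (1 : R)
/-- right multiplication scalar -/
def rt (x : R) : SEnvG K R := (1 : R) ⊗ₜ[K] x

variable {K} in
theorem lr (x y : R) : (x ⊗ₜ[K] y : SEnvG K R) = lf K x * rt K y := by
  simp [lf, rt]

theorem lf_mul (x y : R) : lf K (x * y) = lf K x * lf K y := by simp [lf]
theorem rt_mul (x y : R) : rt K (x * y) = rt K x * rt K y := by simp [rt]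
theorem lf_add (x y : R) : lf K (x + y) = lf K x + lf K y := by simp [lf, add_tmul]
theorem rt_add (x y : R) : rt K (x + y) = rt K x + rt K y := by simp [rt, tmul_add]
theorem lf_neg (x : R) : lf K (-x) = - lf K x := by simp [lf, neg_tmul]
theorem rt_neg (x : R) : rt K (-x) = - rt K x := by simp [rt, tmul_neg]
theorem lf_one : lf K (1 : R) = 1 := rfl
theorem rt_one : rt K (1 : R) = 1 := rfl
theorem lf_zero : lf K (0 : R) = 0 := by simp [lf]
theorem rt_zero : rt K (0 : R) = 0 := by simp [rt]

theorem lfR (x m : R) : (lf K x • m : R) = x * m := by rw [lf, smulR, mul_one]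
theorem rtR (x m : R) : (rt K x • m : R) = x * m := by rw [rt, smulR, one_mul]
theorem lf1 (x : R) (m : BSg R A) : lf K x • m = p11 R A x * m := by
  rw [lf, smul1, map_one, mul_one]
theorem rt1 (x : R) (m : BSg R A) : rt K x • m = p12 R A x * m := by
  rw [rt, smul1, map_one, one_mul]
theorem lf2 (x : R) (m : BBg R A B) : lf K x • m = p21 R A B x * m := by
  rw [lf, smul2, map_one, mul_one]
theorem rt2 (x : R) (m : BBg R A B) : rt K x • m = p23 R A B x * m := by
  rw [rt, smul2, map_one, one_mul]
theorem lf3 {C : Type} [CommRing C] [Algebra K C] [Algebra C R] [IsScalarTower K C R]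
    [SMulCommClass A C R] [SMulCommClass B C R] [SMulCommClass C A R] [SMulCommClass C B R]
    (x : R) (m : B3g R A B C) : lf K x • m = p31 R A B C x * m := by
  rw [lf, smul3]
  have h : p34 R A B C 1 = 1 := map_one _
  rw [h]; ring
theorem rt3 {C : Type} [CommRing C] [Algebra K C] [Algebra C R] [IsScalarTower K C R]
    [SMulCommClass A C R] [SMulCommClass B C R] [SMulCommClass C A R] [SMulCommClass C B R]
    (x : R) (m : B3g R A B C) : rt K x • m = p34 R A B C x * m := by
  rw [rt, smul3]
  have h : p31 R A B C 1 = 1 := map_one _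
  rw [h]; ring

/-! ### generators -/
variable (R A) in
theorem span1 : Submodule.span (SEnvG K R) {(1 : BSg R A)} = ⊤ := by
  rw [eq_top_iff]
  rintro m -
  induction m using TensorProduct.induction_on with
  | zero => exact zero_mem _
  | add s t hs ht => exact add_mem hs ht
  | tmul x y =>
    refine Submodule.mem_span_singleton.2 ⟨x ⊗ₜ y, ?_⟩
    rw [smul1, tm1, mul_one]

theorem span2 (H : Hyp R A B x1 x2 x3) : Submodule.span (SEnvG K R) {(1 : BBg R A B)} = ⊤ := by
  rw [eq_top_iff]
  rintro m -
  induction m using TensorProduct.induction_on with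
  | zero => exact zero_mem _
  | add s t hs ht => exact add_mem hs ht
  | tmul x n =>
    induction n using TensorProduct.induction_on with
    | zero => rw [tmul_zero]; exact zero_mem _
    | add s t hs ht => rw [tmul_add]; exact add_mem hs ht
    | tmul y z =>
      refine Submodule.mem_span_singleton.2 ⟨lf K x * rt K z *
        (rt K (algebraMap B R (H.cB y)) + lf K x3 * rt K (algebraMap B R (H.dB y))), ?_⟩
      rw [mul_smul, mul_smul, add_smul, mul_smul]
      simp only [lf2, rt2]
      rw [tm2]
      have e := congrArg (p22 R A B) (H.decB y)
      rw [map_add, map_mul, bal2, bal2] at e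
      have h3 := bal2' R A B H.xA
      rw [H.xA_eq] at h3
      rw [e, h3]
      ring

theorem span2' (H : Hyp R A B x1 x2 x3) : Submodule.span (SEnvG K R) {(1 : BBg R A A), p22 R A A x1} = ⊤ := by
  rw [eq_top_iff]
  rintro m -
  induction m using TensorProduct.induction_on with
  | zero => exact zero_mem _
  | add s t hs ht => exact add_mem hs ht
  | tmul x n =>
    induction n using TensorProduct.induction_on with
    | zero => rw [tmul_zero]; exact zero_mem _
    | add s t hs ht => rw [tmul_add]; exact add_mem hs ht
    | tmul y z =>
      refine Submodule.mem_span_pair.2 ⟨lf K x * rt K z * rt K (algebraMap A R (H.cA y)),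
        lf K x * rt K z * rt K (algebraMap A R (H.dA y)), ?_⟩
      simp only [mul_smul, lf2, rt2]
      rw [tm2]
      have e := congrArg (p22 R A A) (H.decA y)
      rw [map_add, map_mul, bal2, bal2] at e
      rw [e]
      ring

theorem span3 (H : Hyp R A B x1 x2 x3) : Submodule.span (SEnvG K R) {(1 : B3g R A B A), p33 R A B A x1} = ⊤ := by
  rw [eq_top_iff]
  rintro m -
  induction m using TensorProduct.induction_on with
  | zero => exact zero_mem _
  | add s t hs ht => exact add_mem hs ht
  | tmul x n =>
    induction n using TensorProduct.induction_on with
    | zero => rw [tmul_zero]; exact zero_mem _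
    | add s t hs ht => rw [tmul_add]; exact add_mem hs ht
    | tmul y n =>
      induction n using TensorProduct.induction_on with
      | zero => rw [tmul_zero, tmul_zero]; exact zero_mem _
      | add s t hs ht => rw [tmul_add, tmul_add]; exact add_mem hs ht
      | tmul z w =>
        have key : ∀ (x f w : R), p31 R A B A x * p33 R A B A f * p34 R A B A w ∈
            Submodule.span (SEnvG K R) {(1 : B3g R A B A), p33 R A B A x1} := by
          intro x f w
          refine Submodule.mem_span_pair.2 ⟨lf K x * rt K w * rt K (algebraMap A R (H.cA f)),
            lf K x * rt K w * rt K (algebraMap A R (H.dA f)), ?_⟩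
          simp only [mul_smul, lf3, rt3]
          have e := congrArg (p33 R A B A) (H.decA f)
          rw [map_add, map_mul, bal3, bal3] at e
          rw [e]
          ring
        rw [tm3]
        have e := congrArg (p32 R A B A) (H.decB y)
        rw [map_add, map_mul, bal3', bal3'] at e
        have h3 := bal3'' R A B A H.xA
        rw [H.xA_eq] at h3
        rw [← h3] at e
        have := add_mem (key x (algebraMap B R (H.cB y) * z) w)
          (key (x * x3) (algebraMap B R (H.dB y) * z) w)
        convert this using 1
        rw [e]
        simp only [map_mul]
        ring

/-! ### maps out of `BSg` -/
variable (R A B) in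
/-- elements of `A ∩ B` act the same from both sides -/
def Cen (M : Type) [AddCommGroup M] [Module (SEnvG K R) M] : Prop :=
  ∀ (a : A) (b : B), algebraMap A R a = algebraMap B R b → ∀ m : M,
    lf K (algebraMap A R a) • m = rt K (algebraMap A R a) • m

theorem Cen.swap {M : Type} [AddCommGroup M] [Module (SEnvG K R) M] (h : Cen K R A B M) :
    Cen K R B A M := by
  intro b a e m
  rw [e]
  exact h a b e.symm m

variable (R A B) in
theorem cenAB : Cen K R A B (BBg R A B) := by
  intro a b e m
  rw [lf2, rt2, bal2', e, bal2]

variable (R A B) in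
theorem cenAA : Cen K R A B (BBg R A A) := by
  intro a b e m
  rw [lf2, rt2, bal2', bal2]

variable (R A B) in
theorem cenABA : Cen K R A B (B3g R A B A) := by
  intro a b e m
  rw [lf3, rt3, bal3'', e, bal3', ← e, bal3]

theorem gen_bal (H : Hyp R A B x1 x2 x3) {M : Type} [AddCommGroup M] [Module (SEnvG K R) M]
    (hc : Cen K R A B M) (m : M)
    (h3 : lf K x3 • m = rt K x3 • m) (a : A) :
    lf K (algebraMap A R a) • m = rt K (algebraMap A R a) • m := by
  have := H.gA a
  generalize algebraMap A R a = y at this ⊢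
  induction this using Subring.closure_induction with
  | mem x hx =>
    rcases hx with rfl | ⟨⟨a, rfl⟩, ⟨b, hb⟩⟩
    · exact h3
    · exact hc a b hb.symm m
  | zero => rw [lf_zero, rt_zero]
  | one => rw [lf_one, rt_one]
  | add x y _ _ hx hy => rw [lf_add, rt_add, add_smul, add_smul, hx, hy]
  | neg x _ hx => rw [lf_neg, rt_neg, neg_smul, neg_smul, hx]
  | mul x y _ _ hx hy => rw [lf_mul, mul_smul, hy, smul_comm, hx, mul_comm, rt_mul, mul_smul, smul_comm]

/-- the map `BSg R A → M` sending `1 ⊗ 1` to `m` -/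
def gen1 (H : Hyp R A B x1 x2 x3) {M : Type} [AddCommGroup M] [Module (SEnvG K R) M]
    (hc : Cen K R A B M) (m : M) (h3 : lf K x3 • m = rt K x3 • m) :
    BSg R A →ₗ[SEnvG K R] M :=
  lift1 ((actR K M).flip m)
    (by
      intro a n
      change rt K (algebraMap A R a * n) • m = lf K (algebraMap A R a) • rt K n • m
      rw [smul_comm, gen_bal K H hc m h3, mul_comm, rt_mul, mul_smul])
    (by
      intro a n
      change rt K (a * n) • m = rt K a • rt K n • m
      rw [rt_mul, mul_smul])

theorem gen1_one (H : Hyp R A B x1 x2 x3) {M : Type} [AddCommGroup M] [Module (SEnvG K R) M]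
    (hc : Cen K R A B M) (m : M) (h3 : lf K x3 • m = rt K x3 • m) :
    gen1 K H hc m h3 (1 : BSg R A) = m := by
  change lf K (1 : R) • rt K (1 : R) • m = m
  rw [lf_one, rt_one, one_smul, one_smul]

variable (R A B) in
/-- multiplication of the first two factors -/
def m12 : BBg R A B →ₗ[SEnvG K R] BSg R B :=
  lift2 (AddMonoidHom.id _)
    (by intro a n; exact (lf1 K _ _).symm)
    (by intro a n; exact (rt1 K _ _).symm)

theorem m12_one : m12 K R A B 1 = 1 := by
  change lf K (1 : R) • (1 : BSg R B) = 1
  rw [lf_one, one_smul]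

/-- `z ⊗ w ↦ d z * w` -/
def phi (d : R →ₗ[A] A) : BSg R A →ₗ[A] R :=
  TensorProduct.lift ((LinearMap.lsmul A R) ∘ₗ d)

theorem phi_tm (d : R →ₗ[A] A) (z w : R) : phi d (z ⊗ₜ w) = algebraMap A R (d z) * w := by
  change d z • w = _
  rw [Algebra.smul_def]

theorem phi_l (d : R →ₗ[A] A) (a : A) (n : BSg R A) :
    phi d (p11 R A (algebraMap A R a) * n) = algebraMap A R a * phi d n := by
  rw [← smulA1, map_smul, Algebra.smul_def]

theorem phi_r (d : R →ₗ[A] A) (w : R) (n : BSg R A) :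
    phi d (p12 R A w * n) = w * phi d n := by
  induction n using TensorProduct.induction_on with
  | zero => simp
  | add s t hs ht => rw [mul_add, map_add, map_add, hs, ht, mul_add]
  | tmul u v =>
    have : p12 R A w * (u ⊗ₜ[A] v : BSg R A) = u ⊗ₜ (w * v) := by
      rw [tm1, tm1, map_mul]; ring
    rw [this, phi_tm, phi_tm]; ring

/-- `x ⊗ (y ⊗ z) ↦ x ⊗ d y * z` -/
def chi (d : R →ₗ[A] A) : BBg R A A →ₗ[SEnvG K R] BSg R A :=
  lift2 (((p12 R A).toAddMonoidHom).comp (phi d).toAddMonoidHom)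
    (by
      intro a n
      change p12 R A (phi d _) = lf K (algebraMap A R a) • p12 R A (phi d n)
      rw [phi_l, map_mul, lf1, bal1])
    (by
      intro w n
      change p12 R A (phi d _) = rt K w • p12 R A (phi d n)
      rw [phi_r, map_mul, rt1])

theorem chi_tm (d : R →ₗ[A] A) (y : R) : chi K d (p22 R A A y) = p12 R A (algebraMap A R (d y)) := by
  change lf K (1 : R) • p12 R A (phi d (y ⊗ₜ 1)) = _
  rw [phi_tm, lf_one, one_smul, mul_one]

end Rouq
end

noncomputable section
namespace Rouq
variable (K : Type) [Field K]
variable {R : Type} [CommRing R] [Algebra K R]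
variable {A : Type} [CommRing A] [Algebra K A] [Algebra A R] [IsScalarTower K A R]
variable {B : Type} [CommRing B] [Algebra K B] [Algebra B R] [IsScalarTower K B R]
variable [SMulCommClass A B R] [SMulCommClass B A R] [SMulCommClass A A R] [SMulCommClass B B R]
variable {x1 x2 x3 : R} (H : Hyp R A B x1 x2 x3)

theorem cen_e1 (H : Hyp R A B x1 x2 x3) {M : Type} [AddCommGroup M] [Module (SEnvG K R) M]
    (hc : Cen K R A B M) (m : M) :
    (lf K x1 + lf K x2 + lf K x3) • m = (rt K x1 + rt K x2 + rt K x3) • m := by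
  have := hc (H.sA + H.xA) (H.sB + H.xB)
    (by rw [map_add, map_add, H.sA_eq, H.xA_eq, H.sB_eq, H.xB_eq]; ring) m
  rw [map_add, H.sA_eq, H.xA_eq] at this
  simpa only [lf_add, rt_add] using this

variable (R A B) in
theorem cenA : Cen K R A B (BSg R A) := by
  intro a b e m
  rw [lf1, rt1, bal1]

variable (R A B) in
theorem cenB : Cen K R A B (BSg R B) := by
  intro a b e m
  rw [lf1, rt1, e, bal1]

/-! ### the central elements -/
theorem cT (H : Hyp R A B x1 x2 x3) : lf K x3 • (rt K x3 - lf K x2) • (1 : BBg R B A)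
    = rt K x3 • (rt K x3 - lf K x2) • (1 : BBg R B A) := by
  have h1 := bal2' R B A H.sB
  have h2 := bal2' R B A H.pB
  have h3 := bal2 R B A H.xA
  rw [H.sB_eq, map_add, map_add] at h1
  rw [H.pB_eq, map_mul, map_mul] at h2
  rw [H.xA_eq] at h3
  simp only [sub_smul, lf2, rt2]
  rw [← h3]
  linear_combination p22 R B A x3 * h1 - h2

theorem cJ (H : Hyp R A B x1 x2 x3) : lf K x3 • (rt K x2 - lf K x3) • (1 : BBg R B B)
    = rt K x3 • (rt K x2 - lf K x3) • (1 : BBg R B B) := by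
  have h1 := (bal2' R B B H.sB).trans (bal2 R B B H.sB)
  have h2 := (bal2' R B B H.pB).trans (bal2 R B B H.pB)
  rw [H.sB_eq, map_add, map_add] at h1
  rw [H.pB_eq, map_mul, map_mul] at h2
  simp only [sub_smul, lf2, rt2]
  linear_combination - p21 R B B x3 * h1 + h2

theorem cP (H : Hyp R A B x1 x2 x3) : lf K x3 • (lf K x3 - rt K x2) • (1 : BBg R A B)
    = rt K x3 • (lf K x3 - rt K x2) • (1 : BBg R A B) := by
  have h1 := bal2 R A B H.sB
  have h2 := bal2 R A B H.pB
  have h3 := bal2' R A B H.xA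
  rw [H.sB_eq, map_add, map_add] at h1
  rw [H.pB_eq, map_mul, map_mul] at h2
  rw [H.xA_eq] at h3
  simp only [sub_smul, lf2, rt2]
  rw [h3]
  linear_combination p22 R A B x3 * h1 - h2

theorem cG (H : Hyp R A B x1 x2 x3) :
    lf K x3 • ((lf K x1 + lf K x2 - rt K x3) • (1 : B3g R A B A) - p33 R A B A x1)
    = rt K x3 • ((lf K x1 + lf K x2 - rt K x3) • (1 : B3g R A B A) - p33 R A B A x1) := by
  have h3 := bal3'' R A B A H.xA
  have hs := bal3'' R A B A H.sA
  have h1 := bal3' R A B A H.xB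
  have g1 := bal3' R A B A H.sB
  have g2 := bal3' R A B A H.pB
  have k := bal3 R A B A H.xA
  rw [H.xA_eq] at h3 k
  rw [H.xB_eq] at h1
  rw [H.sA_eq, map_add, map_add] at hs
  rw [H.sB_eq, map_add, map_add] at g1
  rw [H.pB_eq, map_mul, map_mul] at g2
  have key : (lf K x1 + lf K x2 - rt K x3) • (1 : B3g R A B A) - p33 R A B A x1
      = p32 R A B A x2 - p33 R A B A x3 := by
    simp only [sub_smul, add_smul, lf3, rt3]
    rw [k]
    linear_combination hs + h1
  rw [key]
  simp only [lf3, rt3]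
  rw [← k, h3]
  linear_combination g2 - p33 R A B A x3 * g1

theorem c33 (H : Hyp R A B x1 x2 x3) (m : BBg R A A) : lf K x3 • m = rt K x3 • m := by
  have := (bal2' R A A H.xA).trans (bal2 R A A H.xA)
  rw [H.xA_eq] at this
  rw [lf2, rt2, this]

/-! ### the chain map in degrees 1, 2 and the homotopies -/
/-- degree 1 -/
def U1 (K R A B : Type) [Field K] [CommRing R] [Algebra K R] 
    [CommRing A] [Algebra K A] [Algebra A R] [IsScalarTower K A R]
    [CommRing B] [Algebra K B] [Algebra B R] [IsScalarTower K B R] :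
    BSg R A × BSg R B × BSg R A →ₗ[SEnvG K R] BSg R B × BSg R A × BSg R B :=
  (LinearMap.inr _ _ _ ∘ₗ LinearMap.inl _ _ _).coprod
    ((LinearMap.inl _ _ _).coprod (LinearMap.inr _ _ _ ∘ₗ LinearMap.inl _ _ _))

/-- `BSg R A → BBg R A A`, `1 ⊗ 1 ↦ 1` -/
def psi : BSg R A →ₗ[SEnvG K R] BBg R A A := gen1 K H (cenAA K R A B) 1 (c33 K H 1)

/-- degree 2 -/
def U2 : BBg R A B × BBg R A A × BBg R B A →ₗ[SEnvG K R] BBg R B A × BBg R B B × BBg R A B :=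
  (LinearMap.prod 0 (LinearMap.prod (-(psi K H.swap ∘ₗ m12 K R A B)) LinearMap.id)).coprod
    (((LinearMap.prod (gen1 K H (cenAB K R B A).swap ((rt K x3 - lf K x2) • 1) (cT K H))
      (LinearMap.prod (gen1 K H (cenAA K R B A).swap ((rt K x2 - lf K x3) • 1) (cJ K H))
        (gen1 K H (cenAB K R A B) ((lf K x3 - rt K x2) • 1) (cP K H)))) ∘ₗ chi K H.dA).coprod
    (LinearMap.inl _ _ _))

/-- homotopy, degree 1 -/
def Ho1 : BSg R A × BSg R B × BSg R A →ₗ[SEnvG K R] BBg R A B × BBg R A A × BBg R B A :=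
  LinearMap.coprod 0 (LinearMap.coprod 0 (LinearMap.inr _ _ _ ∘ₗ LinearMap.inl _ _ _ ∘ₗ psi K H))

/-- homotopy, degree 2 -/
def Ho2 : BBg R A B × BBg R A A × BBg R B A →ₗ[SEnvG K R] B3g R A B A :=
  LinearMap.coprod 0 (LinearMap.coprod (gen1 K H (cenABA K R A B) _ (cG K H) ∘ₗ chi K H.dA) 0)

theorem chi0 : chi K H.dA 1 = 0 := by
  have := chi_tm K H.dA 1
  rw [H.dA1, map_zero, map_zero] at this
  rw [← this]; congr 1

theorem chi1 : chi K H.dA (p22 R A A x1) = 1 := by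
  rw [chi_tm, H.dAx, map_one, map_one]

theorem U1a : c1 (U1 K R A B) 1 = (0, 1, 0) := by rw [U1, c1_coprod]; rfl
theorem U1b : c2 (U1 K R A B) 1 = (1, 0, 0) := by rw [U1, c2_coprod]; rfl
theorem U1c : c3 (U1 K R A B) 1 = (0, 1, 0) := by rw [U1, c3_coprod]; rfl
theorem U2P : c1 (U2 K H) 1 = (0, -1, 1) := by
  rw [U2, c1_coprod]
  have : psi K H.swap (m12 K R A B 1) = 1 := by rw [m12_one, psi, gen1_one]
  change (0, -(psi K H.swap (m12 K R A B 1)), _) = _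
  rw [this]; rfl
theorem U2T : c3 (U2 K H) 1 = (1, 0, 0) := by rw [U2, c3_coprod]; rfl
theorem U2Q0 : c2 (U2 K H) 1 = (0, 0, 0) := by
  rw [U2, c2_coprod, LinearMap.comp_apply, chi0, map_zero]; rfl
theorem U2Q1 : c2 (U2 K H) (p22 R A A x1)
    = ((rt K x3 - lf K x2) • 1, (rt K x2 - lf K x3) • 1, (lf K x3 - rt K x2) • 1) := by
  rw [U2, c2_coprod, LinearMap.comp_apply, chi1]
  exact Prod.ext (gen1_one K H _ _ _) (Prod.ext (gen1_one K H _ _ _) (gen1_one K H _ _ _))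
theorem Ho1a : c1 (Ho1 K H) 1 = (0, 0, 0) := by rw [Ho1, c1_coprod]; rfl
theorem Ho1b : c2 (Ho1 K H) 1 = (0, 0, 0) := by rw [Ho1, c2_coprod]; rfl
theorem Ho1c : c3 (Ho1 K H) 1 = (0, 1, 0) := by
  rw [Ho1, c3_coprod, LinearMap.comp_apply, LinearMap.comp_apply, psi, gen1_one]; rfl
theorem Ho2P : c1 (Ho2 K H) 1 = 0 := by rw [Ho2, c1_coprod]; rfl
theorem Ho2T : c3 (Ho2 K H) 1 = 0 := by rw [Ho2, c3_coprod]; rfl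
theorem Ho2Q0 : c2 (Ho2 K H) 1 = 0 := by
  rw [Ho2, c2_coprod, LinearMap.comp_apply, chi0, map_zero]
theorem Ho2Q1 : c2 (Ho2 K H) (p22 R A A x1)
    = (lf K x1 + lf K x2 - rt K x3) • 1 - p33 R A B A x1 := by
  rw [Ho2, c2_coprod, LinearMap.comp_apply, chi1, gen1_one]

end Rouq
end

noncomputable section
namespace Rouq
variable (K : Type) [Field K]
variable {R : Type} [CommRing R] [Algebra K R]
variable {A : Type} [CommRing A] [Algebra K A] [Algebra A R] [IsScalarTower K A R]
variable {B : Type} [CommRing B] [Algebra K B] [Algebra B R] [IsScalarTower K B R]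
variable [SMulCommClass A B R] [SMulCommClass B A R] [SMulCommClass A A R] [SMulCommClass B B R]
variable {x1 x2 x3 : R}

/-- elements of `A ∩ B` have the same images -/
def CenLR {R M : Type} (A B : Type) [CommRing R] [CommRing M] [CommRing A] [CommRing B]
    [Algebra A R] [Algebra B R] (l r : R →+* M) : Prop :=
  ∀ (a : A) (b : B), algebraMap A R a = algebraMap B R b →
    l (algebraMap A R a) = r (algebraMap A R a)

section gen
variable {M : Type} [CommRing M] (l r : R →+* M) (H : Hyp R A B x1 x2 x3)

/-- `z ↦ r (c z) + nu * r (d z)` -/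
def Qf : R →+ M where
  toFun z := r (algebraMap A R (H.cA z))
    + (l x1 + l x2 - r x3) * r (algebraMap A R (H.dA z))
  map_zero' := by simp only [map_zero, mul_zero, add_zero]
  map_add' z w := by simp only [map_add]; ring

theorem Qf_apply (z : R) : Qf l r H z = r (algebraMap A R (H.cA z))
    + (l x1 + l x2 - r x3) * r (algebraMap A R (H.dA z)) := rfl

theorem Qf_smul (a : A) (z : R) :
    Qf l r H (algebraMap A R a * z) = r (algebraMap A R a) * Qf l r H z := by
  rw [Qf_apply, Qf_apply, ← Algebra.smul_def, H.cA.map_smul, H.dA.map_smul, smul_eq_mul, smul_eq_mul,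
    RingHom.map_mul, RingHom.map_mul, RingHom.map_mul, RingHom.map_mul]
  ring

theorem Qf_one : Qf l r H 1 = 1 := by
  rw [Qf_apply, H.cA1, H.dA1]
  simp only [map_one, map_zero]
  ring

theorem Qf_x1 : Qf l r H x1 = (l x1 + l x2 - r x3) := by
  rw [Qf_apply, H.cAx, H.dAx]
  simp only [map_one, map_zero]
  ring

/-- `z ⊗ w ↦ Q z * r w` -/
def Tf : BSg R A →+ M :=
  TensorProduct.liftAddHom
    ((AddMonoidHom.compHom.flip (r).toAddMonoidHom).comp (AddMonoidHom.mul.comp (Qf l r H)))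
    (by
      intro a x n
      change Qf l r H (a • x) * r n = Qf l r H x * r (a • n)
      rw [Algebra.smul_def, Algebra.smul_def, Qf_smul, map_mul]
      ring)

theorem Tf_tm (z w : R) : Tf l r H (z ⊗ₜ w) = Qf l r H z * r w := rfl

theorem Tf_r (w : R) (n : BSg R A) : Tf l r H (p12 R A w * n) = r w * Tf l r H n := by
  induction n using TensorProduct.induction_on with
  | zero => simp only [mul_zero, map_zero]
  | add s t hs ht => rw [mul_add, map_add, map_add, hs, ht]; ring
  | tmul u v =>
    have : p12 R A w * (u ⊗ₜ[A] v : BSg R A) = u ⊗ₜ (w * v) := by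
      rw [tm1, tm1, map_mul]; ring
    rw [this, Tf_tm, Tf_tm, map_mul]; ring

theorem Tf_l (a : A) (n : BSg R A) :
    Tf l r H (p11 R A (algebraMap A R a) * n) = r (algebraMap A R a) * Tf l r H n := by
  rw [bal1, Tf_r]

/-- `y ⊗ n ↦ T (c y * n) + l3 * T (d y * n)` -/
def Pf : BBg R B A →+ M :=
  TensorProduct.liftAddHom
    { toFun := fun y =>
        { toFun := fun n => Tf l r H (p11 R A (algebraMap B R (H.cB y)) * n)
            + l x3 * Tf l r H (p11 R A (algebraMap B R (H.dB y)) * n)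
          map_zero' := by simp only [mul_zero, map_zero, add_zero]
          map_add' := by intro n m; simp only [mul_add, map_add]; ring }
      map_zero' := by
        ext n
        change Tf l r H (p11 R A (algebraMap B R (H.cB 0)) * n)
            + l x3 * Tf l r H (p11 R A (algebraMap B R (H.dB 0)) * n) = 0
        simp only [zero_mul, mul_zero, map_zero, add_zero]
      map_add' := by
        intro y y'
        ext n
        change Tf l r H (p11 R A (algebraMap B R (H.cB (y + y'))) * n)
            + l x3 * Tf l r H (p11 R A (algebraMap B R (H.dB (y + y'))) * n)
          = (Tf l r H (p11 R A (algebraMap B R (H.cB y)) * n)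
            + l x3 * Tf l r H (p11 R A (algebraMap B R (H.dB y)) * n))
           + (Tf l r H (p11 R A (algebraMap B R (H.cB y')) * n)
            + l x3 * Tf l r H (p11 R A (algebraMap B R (H.dB y')) * n))
        simp only [map_add, add_mul]
        ring }
    (by
      intro b y n
      change Tf l r H (p11 R A (algebraMap B R (H.cB (b • y))) * n)
            + l x3 * Tf l r H (p11 R A (algebraMap B R (H.dB (b • y))) * n)
          = (Tf l r H (p11 R A (algebraMap B R (H.cB y)) * (b • n))
            + l x3 * Tf l r H (p11 R A (algebraMap B R (H.dB y)) * (b • n)))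
      rw [H.cB.map_smul, H.dB.map_smul, smul_eq_mul, smul_eq_mul, smulA1, RingHom.map_mul,
        RingHom.map_mul, RingHom.map_mul, RingHom.map_mul,
        mul_comm (p11 R A (algebraMap B R b)), mul_comm (p11 R A (algebraMap B R b)),
        mul_assoc, mul_assoc])

theorem Pf_tm (y : R) (n : BSg R A) :
    Pf l r H (y ⊗ₜ n) = Tf l r H (p11 R A (algebraMap B R (H.cB y)) * n)
            + l x3 * Tf l r H (p11 R A (algebraMap B R (H.dB y)) * n) := rfl

theorem Pf_r (w : R) (n : BBg R B A) : Pf l r H (p23 R B A w * n) = r w * Pf l r H n := by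
  induction n using TensorProduct.induction_on with
  | zero => simp only [mul_zero, map_zero]
  | add s t hs ht => rw [mul_add, map_add, map_add, hs, ht]; ring
  | tmul u v =>
    have : p23 R B A w * (u ⊗ₜ[B] v : BBg R B A) = u ⊗ₜ (p12 R A w * v) := by
      rw [tm2', tm2', map_mul]
      change _ = _ * (p23 R B A w * _)
      ring
    rw [this, Pf_tm, Pf_tm, mul_left_comm, Tf_r, mul_left_comm, Tf_r]; ring

/-- `x2` decomposes -/
theorem Qf_x2 (z : R) : Qf l r H (x2 * z) = r (x1 + x2) * Qf l r H z - Qf l r H (x1 * z) := by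
  have := Qf_smul l r H H.sA z
  rw [H.sA_eq] at this
  rw [← this, ← map_sub]
  congr 1; ring

/-- the key cubic identity -/
theorem Qf_key (hC : CenLR A B l r) (z : R) :
    - Qf l r H (x3 * x2 * z) + l x3 * Qf l r H ((x3 + x2) * z)
      = l x3 * l x3 * Qf l r H z := by
  have hS : ∀ w : R, (∃ a : A, algebraMap A R a = w) → (∃ b : B, algebraMap B R b = w) →
      l w = r w := by
    rintro w ⟨a, ha⟩ ⟨b, hb⟩
    rw [← ha]
    exact hC a b (ha.trans hb.symm)
  have hsum := hS (x1 + x2 + x3)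
    ⟨H.sA + H.xA, by rw [map_add, H.xA_eq, H.sA_eq]⟩
    ⟨H.sB + H.xB, by rw [map_add, H.xB_eq, H.sB_eq]; ring⟩
  have h2 := hS (x1 * x2 + x1 * x3 + x2 * x3)
    ⟨H.pA + H.xA * H.sA, by rw [map_add, map_mul, H.pA_eq, H.xA_eq, H.sA_eq]; ring⟩
    ⟨H.pB + H.xB * H.sB, by rw [map_add, map_mul, H.pB_eq, H.xB_eq, H.sB_eq]; ring⟩
  have h3 := hS (x1 * x2 * x3)
    ⟨H.pA * H.xA, by rw [map_mul, H.pA_eq, H.xA_eq]⟩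
    ⟨H.pB * H.xB, by rw [map_mul, H.pB_eq, H.xB_eq]; ring⟩
  simp only [map_add, map_mul] at h2 h3 hsum
  have hx3 : ∀ z, Qf l r H (x3 * z) = r x3 * Qf l r H z := by
    intro z
    have := Qf_smul l r H H.xA z
    rwa [H.xA_eq] at this
  have hp : ∀ z, Qf l r H (x1 * x2 * z) = r x1 * r x2 * Qf l r H z := by
    intro z
    have := Qf_smul l r H H.pA z
    rwa [H.pA_eq, RingHom.map_mul] at this
  -- the case z = 1
  have k1 : - Qf l r H (x3 * x2 * 1) + l x3 * Qf l r H ((x3 + x2) * 1)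
      = l x3 * l x3 * Qf l r H 1 := by
    rw [mul_assoc, hx3, add_mul, map_add, hx3, Qf_x2, map_add, mul_one x1, Qf_x1, Qf_one]
    linear_combination (r x3 - l x3) * hsum
  have k2 : - Qf l r H (x3 * x2 * x1) + l x3 * Qf l r H ((x3 + x2) * x1)
      = l x3 * l x3 * Qf l r H x1 := by
    have e : x2 * x1 = x1 * x2 * 1 := by ring
    rw [mul_assoc, hx3, add_mul, map_add, hx3, e, hp, Qf_x1, Qf_one]
    linear_combination h3 - l x3 * h2 + l x3 * r x3 * hsum
  have e1 : ∀ (f : R) (z : R), Qf l r H (f * z) = r (algebraMap A R (H.cA z)) * Qf l r H (f * 1)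
      + r (algebraMap A R (H.dA z)) * Qf l r H (f * x1) := by
    intro f z
    rw [← Qf_smul, ← Qf_smul, ← map_add]
    congr 1
    conv_lhs => rw [H.decA z]
    ring
  have e2 := e1 1 z
  rw [one_mul, one_mul, one_mul] at e2
  rw [e1 (x3 * x2) z, e1 (x3 + x2) z, e2]
  linear_combination r (algebraMap A R (H.cA z)) * k1
    + r (algebraMap A R (H.dA z)) * k2

theorem Tf_key (hC : CenLR A B l r) (n : BSg R A) :
    - Tf l r H (p11 R A (x3 * x2) * n) + l x3 * Tf l r H (p11 R A (x3 + x2) * n)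
      = l x3 * l x3 * Tf l r H n := by
  induction n using TensorProduct.induction_on with
  | zero => simp only [mul_zero, map_zero, neg_zero, add_zero]
  | add s t hs ht => simp only [mul_add, map_add] at hs ht ⊢; linear_combination hs + ht
  | tmul u v =>
    have e : ∀ f, p11 R A f * (u ⊗ₜ[A] v : BSg R A) = (f * u) ⊗ₜ v := by
      intro f
      rw [tm1, tm1, map_mul]; ring
    rw [e, e, Tf_tm, Tf_tm, Tf_tm]
    linear_combination r v * Qf_key l r H hC u

theorem Pf_l (hC : CenLR A B l r) (a : A) (n : BBg R B A) :
    Pf l r H (p21 R B A (algebraMap A R a) * n) = l (algebraMap A R a) * Pf l r H n := by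
  have := H.gA a
  generalize algebraMap A R a = y at this ⊢
  induction this using Subring.closure_induction generalizing n with
  | zero => simp only [zero_mul, map_zero]
  | one => 
    simp only [map_one]
    rw [one_mul]; ring
  | add x y _ _ hx hy => simp only [map_add, add_mul]; rw [hx, hy]
  | neg x _ hx => 
    have e : p21 R B A (-x) * n = p21 R B A x * (-n) := by
      rw [map_neg]; ring
    rw [e, hx, map_neg, map_neg]; ring
  | mul x y _ _ hx hy => simp only [map_mul]; rw [mul_assoc, hx, hy]; ring
  | mem x hx =>
    have e : ∀ f u v, p21 R B A f * (u ⊗ₜ[B] v : BBg R B A) = (f * u) ⊗ₜ v := by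
      intro f u v
      rw [tm2', tm2', map_mul]; ring
    induction n using TensorProduct.induction_on with
    | zero => simp only [mul_zero, map_zero]
    | add s t hs ht => rw [mul_add, map_add, map_add, hs, ht]; ring
    | tmul u v =>
      rw [e]
      rcases hx with rfl | ⟨⟨a, ha⟩, ⟨b, hb⟩⟩
      · have hd : x * u = (H.cB u) • x + H.dB u • (x * x) := by
          conv_lhs => rw [H.decB u]
          rw [Algebra.smul_def, Algebra.smul_def]; ring
        have hxx : x * x = H.sB • x - H.pB • 1 := by
          rw [Algebra.smul_def, Algebra.smul_def, H.sB_eq, H.pB_eq]; ring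
        have hc : H.cB (x * u) = - (H.dB u * H.pB) := by
          rw [hd, hxx]
          simp only [map_add, map_sub, map_smul, smul_eq_mul, H.cBx, H.cB1]
          ring
        have hdd : H.dB (x * u) = H.cB u + H.dB u * H.sB := by
          rw [hd, hxx]
          simp only [map_add, map_sub, map_smul, smul_eq_mul, H.dBx, H.dB1]
          ring
        rw [Pf_tm, Pf_tm, hc, hdd]
        have k := Tf_key l r H hC (p11 R A (algebraMap B R (H.dB u)) * v)
        rw [map_neg, map_neg, neg_mul, map_neg, map_add, map_add, add_mul, map_add,
          mul_comm (H.dB u) H.pB, mul_comm (H.dB u) H.sB, RingHom.map_mul, RingHom.map_mul,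
          RingHom.map_mul, RingHom.map_mul,
          H.pB_eq, H.sB_eq, mul_assoc, mul_assoc]
        linear_combination k
      · have hw : l x = r x := by
          rw [← ha]
          exact hC a b (ha.trans hb.symm)
        have hT : ∀ n, Tf l r H (p11 R A x * n) = r x * Tf l r H n := by
          intro n; rw [← ha, Tf_l]
        have hcb : H.cB (x * u) = b * H.cB u := by
          rw [← hb, ← Algebra.smul_def, map_smul, smul_eq_mul]
        have hdb : H.dB (x * u) = b * H.dB u := by
          rw [← hb, ← Algebra.smul_def, map_smul, smul_eq_mul]
        rw [Pf_tm, Pf_tm, hcb, hdb, RingHom.map_mul, RingHom.map_mul, RingHom.map_mul,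
          RingHom.map_mul, hb, mul_assoc, mul_assoc,
          hT, hT, hw]
        ring

end gen
variable (H : Hyp R A B x1 x2 x3)

variable (R A B) in
theorem cenLR : CenLR (M := B3g R B A B) A B (p31 R B A B) (p34 R B A B) := by
  intro a b e
  rw [e, bal3'', ← e, bal3', e, bal3]

/-- degree 3 -/
def U3 : B3g R A B A →ₗ[SEnvG K R] B3g R B A B :=
  lift3 (Pf (M := B3g R B A B) (p31 R B A B) (p34 R B A B) H)
    (by intro a n; rw [Pf_l _ _ H (cenLR R A B)]; exact (lf3 K _ _).symm)
    (by intro w n; rw [Pf_r]; exact (rt3 K _ _).symm)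

theorem U3_aux (z : R) : U3 K H (p33 R A B A z) = Qf (M := B3g R B A B) (p31 R B A B) (p34 R B A B) H z := by
  change lf K (1 : R) • Pf (M := B3g R B A B) (p31 R B A B) (p34 R B A B) H (1 ⊗ₜ (z ⊗ₜ 1)) = _
  rw [lf_one, one_smul, Pf_tm, H.cB1, H.dB1, map_one, map_zero, map_one, map_zero, one_mul,
    zero_mul, map_zero, Tf_tm, map_one]
  ring

theorem U30 : U3 K H 1 = 1 := by
  have := U3_aux K H 1
  rw [Qf_one] at this
  rw [← this]; congr 1

theorem U31 : U3 K H (p33 R A B A x1) = (lf K x1 + lf K x2 - rt K x3) • 1 := by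
  rw [U3_aux, Qf_x1]
  simp only [sub_smul, add_smul, lf3, rt3]
  ring

end Rouq
end

noncomputable section
namespace Rouq
variable (K : Type) [Field K]
variable {R : Type} [CommRing R] [Algebra K R]
variable {A : Type} [CommRing A] [Algebra K A] [Algebra A R] [IsScalarTower K A R]
variable {B : Type} [CommRing B] [Algebra K B] [Algebra B R] [IsScalarTower K B R]
variable [SMulCommClass A B R] [SMulCommClass B A R] [SMulCommClass A A R] [SMulCommClass B B R]
variable {x1 x2 x3 : R} (H : Hyp R A B x1 x2 x3)

/-- the formulas for the differentials -/
structure Dif (δ₃ : B3g R A B A →ₗ[SEnvG K R] BBg R A B × BBg R A A × BBg R B A)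
    (δ₂ : BBg R A B × BBg R A A × BBg R B A →ₗ[SEnvG K R] BSg R A × BSg R B × BSg R A)
    (δ₁ : BSg R A × BSg R B × BSg R A →ₗ[SEnvG K R] R) : Prop where
  d3 : ∀ x y z w : R, δ₃ (x ⊗ₜ (y ⊗ₜ (z ⊗ₜ w))) =
        (x ⊗ₜ (y ⊗ₜ (z * w)), -(x ⊗ₜ ((y * z) ⊗ₜ w)), (x * y) ⊗ₜ (z ⊗ₜ w))
  d2a : ∀ x y z : R, δ₂ (x ⊗ₜ (y ⊗ₜ z), 0, 0) = (-(x ⊗ₜ (y * z)), (x * y) ⊗ₜ z, 0)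
  d2b : ∀ x y z : R, δ₂ (0, x ⊗ₜ (y ⊗ₜ z), 0) = (-(x ⊗ₜ (y * z)), 0, (x * y) ⊗ₜ z)
  d2c : ∀ x y z : R, δ₂ (0, 0, x ⊗ₜ (y ⊗ₜ z)) = (0, -(x ⊗ₜ (y * z)), (x * y) ⊗ₜ z)
  d1 : ∀ x y z w p q : R, δ₁ (x ⊗ₜ y, z ⊗ₜ w, p ⊗ₜ q) = x * y + z * w + p * q

variable {K}
variable {δ₃ : B3g R A B A →ₗ[SEnvG K R] BBg R A B × BBg R A A × BBg R B A}
    {δ₂ : BBg R A B × BBg R A A × BBg R B A →ₗ[SEnvG K R] BSg R A × BSg R B × BSg R A}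
    {δ₁ : BSg R A × BSg R B × BSg R A →ₗ[SEnvG K R] R}

theorem Dif.d30 (D : Dif K δ₃ δ₂ δ₁) : δ₃ 1 = (1, -1, 1) := by
  have := D.d3 1 1 1 1
  rw [mul_one] at this
  exact this

theorem Dif.d31 (H : Hyp R A B x1 x2 x3) (D : Dif K δ₃ δ₂ δ₁) :
    δ₃ (p33 R A B A x1) = (rt K x1 • 1, -(p22 R A A x1), lf K x1 • 1) := by
  have := D.d3 1 1 x1 1
  rw [mul_one, mul_one, one_mul] at this
  refine Eq.trans this ?_
  have e := bal2' R B A H.xB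
  rw [H.xB_eq] at e
  rw [lf2, rt2, e, mul_one, mul_one]
  rfl

theorem Dif.d2P (D : Dif K δ₃ δ₂ δ₁) : c1 δ₂ 1 = (-1, 1, 0) := by
  have := D.d2a 1 1 1
  rw [mul_one] at this
  exact this

theorem Dif.d2T (D : Dif K δ₃ δ₂ δ₁) : c3 δ₂ 1 = (0, -1, 1) := by
  have := D.d2c 1 1 1
  rw [mul_one] at this
  exact this

theorem Dif.d2Q0 (D : Dif K δ₃ δ₂ δ₁) : c2 δ₂ 1 = (-1, 0, 1) := by
  have := D.d2b 1 1 1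
  rw [mul_one] at this
  exact this

theorem Dif.d2Q1 (D : Dif K δ₃ δ₂ δ₁) (x : R) :
    c2 δ₂ (p22 R A A x) = (-(rt K x • 1), 0, lf K x • 1) := by
  have := D.d2b 1 x 1
  rw [mul_one, one_mul] at this
  rw [lf1, rt1, mul_one, mul_one]
  exact this

theorem Dif.d1a (D : Dif K δ₃ δ₂ δ₁) : c1 δ₁ 1 = 1 := by
  have := D.d1 1 1 0 0 0 0
  rw [zero_tmul, zero_tmul, mul_one, mul_zero, add_zero, add_zero] at this
  exact this
theorem Dif.d1b (D : Dif K δ₃ δ₂ δ₁) : c2 δ₁ 1 = 1 := by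
  have := D.d1 0 0 1 1 0 0
  rw [zero_tmul, mul_one, mul_zero, add_zero, zero_add] at this
  exact this
theorem Dif.d1c (D : Dif K δ₃ δ₂ δ₁) : c3 δ₁ 1 = 1 := by
  have := D.d1 0 0 0 0 1 1
  rw [zero_tmul, zero_tmul, mul_one, mul_zero, zero_add, zero_add] at this
  exact this

variable {ε₃ : B3g R B A B →ₗ[SEnvG K R] BBg R B A × BBg R B B × BBg R A B}
    {ε₂ : BBg R B A × BBg R B B × BBg R A B →ₗ[SEnvG K R] BSg R B × BSg R A × BSg R B}
    {ε₁ : BSg R B × BSg R A × BSg R B →ₗ[SEnvG K R] R}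

theorem halfH (H : Hyp R A B x1 x2 x3) (D : Dif K δ₃ δ₂ δ₁) (E : Dif K ε₃ ε₂ ε₁) :
    (δ₂ ∘ₗ δ₃ = 0 ∧ δ₁ ∘ₗ δ₂ = 0) ∧
    (U2 K H ∘ₗ δ₃ = ε₃ ∘ₗ U3 K H ∧ U1 K R A B ∘ₗ δ₂ = ε₂ ∘ₗ U2 K H ∧
      LinearMap.id ∘ₗ δ₁ = ε₁ ∘ₗ U1 K R A B) ∧
    (U3 K H.swap ∘ₗ U3 K H + Ho2 K H ∘ₗ δ₃ = LinearMap.id ∧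
     U2 K H.swap ∘ₗ U2 K H + δ₃ ∘ₗ Ho2 K H + Ho1 K H ∘ₗ δ₂ = LinearMap.id ∧
     U1 K R B A ∘ₗ U1 K R A B + δ₂ ∘ₗ Ho1 K H +
      (0 : R →ₗ[SEnvG K R] BSg R A × BSg R B × BSg R A) ∘ₗ δ₁ = LinearMap.id) := by
  refine half (lf K x1) (lf K x2) (lf K x3) (rt K x1) (rt K x2) (rt K x3)
    (span1 K R A) (span1 K R B) (span2 K H) (span2 K H.swap) (span2' K H) (span3 K H)
    ?_ (cen_e1 K H (cenA K R A B) 1) ?_ (cen_e1 K H (cenB K R A B) 1)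
    (cen_e1 K H (cenAA K R B A).swap 1) (cen_e1 K H (cenAB K R A B) 1)
    δ₃ δ₂ δ₁ ε₃ ε₂ ε₁ D.d30 (D.d31 H) D.d2P D.d2T D.d2Q0 (D.d2Q1 x1) D.d1a D.d1b D.d1c
    E.d30 E.d2P E.d2T E.d2Q0 E.d1a E.d1b E.d1c
    (U3 K H) (U2 K H) (U1 K R A B) (U3 K H.swap) (U2 K H.swap) (U1 K R B A)
    (U30 K H) (U31 K H) (U2P K H) (U2T K H) (U2Q0 K H) (U2Q1 K H)
    (U1a K) (U1b K) (U1c K)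
    (U30 K H.swap) (U2P K H.swap) (U2T K H.swap) (U2Q0 K H.swap)
    (U1a K) (U1b K) (Ho2 K H) (Ho1 K H)
    (Ho2P K H) (Ho2T K H) (Ho2Q0 K H) (Ho2Q1 K H) (Ho1a K H) (Ho1b K H) (Ho1c K H)
  · rw [lfR, rtR]
  · have e := bal1 R B H.xB
    rw [H.xB_eq] at e
    rw [lf1, rt1, e]

end Rouq
end

noncomputable section
namespace Rouq
section conc
variable {K : Type} [Field K] {N : ℕ}

theorem mem_swapInv {i j : Fin N} {f : Rp K N} :
    f ∈ swapInv K N i j ↔ rename (⇑(Equiv.swap i j)) f = f := Iff.rfl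

theorem swapInv_comm (i j : Fin N) : swapInv K N i j = swapInv K N j i := by
  ext f
  rw [mem_swapInv, mem_swapInv, Equiv.swap_comm]

theorem s_mem (i j : Fin N) : (X i + X j : Rp K N) ∈ swapInv K N i j := by
  rw [mem_swapInv, map_add, rename_X, rename_X, Equiv.swap_apply_left, Equiv.swap_apply_right,
    add_comm]

theorem p_mem (i j : Fin N) : (X i * X j : Rp K N) ∈ swapInv K N i j := by
  rw [mem_swapInv, map_mul, rename_X, rename_X, Equiv.swap_apply_left, Equiv.swap_apply_right,
    mul_comm]

theorem x_mem {i j k : Fin N} (h1 : k ≠ i) (h2 : k ≠ j) : (X k : Rp K N) ∈ swapInv K N i j := by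
  rw [mem_swapInv, rename_X, Equiv.swap_apply_of_ne_of_ne h1 h2]

variable (K) in
/-- explicit generators of the invariants -/
def Tinv (i j : Fin N) : Subalgebra K (Rp K N) :=
  Algebra.adjoin K ({X i + X j, X i * X j} ∪ {f | ∃ k, k ≠ i ∧ k ≠ j ∧ f = X k})

theorem Tinv_le (i j : Fin N) : Tinv K i j ≤ swapInv K N i j := by
  refine Algebra.adjoin_le ?_
  rintro f ((rfl | rfl) | ⟨k, h1, h2, rfl⟩)
  · exact s_mem i j
  · exact p_mem i j
  · exact x_mem h1 h2

theorem exT (i j : Fin N) (f : Rp K N) :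
    ∃ c ∈ Tinv K i j, ∃ d ∈ Tinv K i j, f = c + X i * d := by
  have hs : (X i + X j : Rp K N) ∈ Tinv K i j := Algebra.subset_adjoin (Or.inl (Or.inl rfl))
  have hp : (X i * X j : Rp K N) ∈ Tinv K i j := Algebra.subset_adjoin (Or.inl (Or.inr rfl))
  induction f using MvPolynomial.induction_on with
  | C a => exact ⟨C a, (Tinv K i j).algebraMap_mem a, 0, zero_mem _, by ring⟩
  | add p q hp hq =>
    obtain ⟨c, hc, d, hd, e⟩ := hp
    obtain ⟨c', hc', d', hd', e'⟩ := hq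
    exact ⟨c + c', add_mem hc hc', d + d', add_mem hd hd', by rw [e, e']; ring⟩
  | mul_X p k ih =>
    obtain ⟨c, hc, d, hd, e⟩ := ih
    by_cases h1 : k = i
    · subst h1
      exact ⟨-(X k * X j * d), neg_mem (mul_mem hp hd), c + (X k + X j) * d,
        add_mem hc (mul_mem hs hd), by rw [e]; ring⟩
    by_cases h2 : k = j
    · subst h2
      exact ⟨(X i + X k) * c + X i * X k * d, add_mem (mul_mem hs hc) (mul_mem hp hd), -c,
        neg_mem hc, by rw [e]; ring⟩
    have hk : (X k : Rp K N) ∈ Tinv K i j := Algebra.subset_adjoin (Or.inr ⟨k, h1, h2, rfl⟩)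
    exact ⟨X k * c, mul_mem hk hc, X k * d, mul_mem hk hd, by rw [e]; ring⟩

theorem uniq0 {i j : Fin N} (hij : i ≠ j) {c d : Rp K N} (hc : c ∈ swapInv K N i j)
    (hd : d ∈ swapInv K N i j) (h : c + X i * d = 0) : c = 0 ∧ d = 0 := by
  have h' := congrArg (rename (⇑(Equiv.swap i j))) h
  rw [map_add, map_mul, map_zero, mem_swapInv.1 hc, mem_swapInv.1 hd, rename_X,
    Equiv.swap_apply_left] at h'
  have h2 : (X i - X j : Rp K N) * d = 0 := by linear_combination h - h'
  have hd0 : d = 0 := by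
    rcases mul_eq_zero.1 h2 with h3 | h3
    · exact absurd (X_injective (sub_eq_zero.1 h3)) hij
    · exact h3
  refine ⟨?_, hd0⟩
  rw [hd0, mul_zero, add_zero] at h
  exact h

theorem uniq1 {i j : Fin N} (hij : i ≠ j) {c d c' d' : Rp K N} (hc : c ∈ swapInv K N i j)
    (hd : d ∈ swapInv K N i j) (hc' : c' ∈ swapInv K N i j)
    (hd' : d' ∈ swapInv K N i j) (h : c + X i * d = c' + X i * d') : c = c' ∧ d = d' := by
  have := uniq0 hij (sub_mem hc hc') (sub_mem hd hd') (by linear_combination h)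
  exact ⟨sub_eq_zero.1 this.1, sub_eq_zero.1 this.2⟩

theorem inv_eq {i j : Fin N} (hij : i ≠ j) : swapInv K N i j = Tinv K i j := by
  refine le_antisymm ?_ (Tinv_le i j)
  intro f hf
  obtain ⟨c, hc, d, hd, e⟩ := exT i j f
  have := uniq1 hij hf (zero_mem _) (Tinv_le i j hc) (Tinv_le i j hd)
    (by rw [mul_zero, add_zero]; exact e)
  rw [this.1]; exact hc

theorem dec {i j : Fin N} (hij : i ≠ j) (S : Subalgebra K (Rp K N)) (hS : S = swapInv K N i j) :
    ∃ c d : Rp K N →ₗ[S] S, (∀ f, f = algebraMap S (Rp K N) (c f) + X i * algebraMap S (Rp K N) (d f))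
      ∧ c 1 = 1 ∧ d 1 = 0 ∧ c (X i) = 0 ∧ d (X i) = 1 := by
  have ex : ∀ f : Rp K N, ∃ p : S × S, f = (p.1 : Rp K N) + X i * (p.2 : Rp K N) := by
    intro f
    obtain ⟨c, hc, d, hd, e⟩ := exT i j f
    exact ⟨(⟨c, hS ▸ Tinv_le i j hc⟩, ⟨d, hS ▸ Tinv_le i j hd⟩), e⟩
  have un : ∀ p q : S × S, (p.1 : Rp K N) + X i * (p.2 : Rp K N)
      = (q.1 : Rp K N) + X i * (q.2 : Rp K N) → p = q := by
    rintro ⟨⟨a, ha⟩, ⟨b, hb⟩⟩ ⟨⟨c, hc⟩, ⟨d, hd⟩⟩ h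
    subst hS
    obtain ⟨e1, e2⟩ := uniq1 hij ha hb hc hd h
    subst e1 e2
    rfl
  choose p hp using ex
  have padd : ∀ f g, p (f + g) = p f + p g := by
    intro f g
    apply un
    rw [← hp]
    conv_lhs => rw [hp f, hp g]
    change _ = ((p f).1 + (p g).1 : Rp K N) + X i * ((p f).2 + (p g).2 : Rp K N)
    ring
  have psmul : ∀ (s : S) f, p (s • f) = (s * (p f).1, s * (p f).2) := by
    intro s f
    apply un
    rw [← hp]
    change (s : Rp K N) * f = (s * (p f).1 : Rp K N) + X i * (s * (p f).2 : Rp K N)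
    conv_lhs => rw [hp f]
    ring
  have p1 : p 1 = (1, 0) := by
    apply un
    rw [← hp]
    change 1 = (1 : Rp K N) + X i * (0 : Rp K N)
    ring
  have px : p (X i) = (0, 1) := by
    apply un
    rw [← hp]
    change X i = (0 : Rp K N) + X i * (1 : Rp K N)
    ring
  refine ⟨⟨⟨fun f => (p f).1, ?_⟩, ?_⟩, ⟨⟨fun f => (p f).2, ?_⟩, ?_⟩, hp, ?_, ?_, ?_, ?_⟩
  · intro f g; exact congrArg Prod.fst (padd f g)
  · intro f g; exact congrArg Prod.fst (psmul f g)
  · intro f g; exact congrArg Prod.snd (padd f g)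
  · intro f g; exact congrArg Prod.snd (psmul f g)
  · exact congrArg Prod.fst p1
  · exact congrArg Prod.snd p1
  · exact congrArg Prod.fst px
  · exact congrArg Prod.snd px

theorem gens {i j k : Fin N} (hij : i ≠ j) (hik : i ≠ k) (hjk : j ≠ k)
    (S T : Subalgebra K (Rp K N)) (hS : S = swapInv K N i j) (hT : T = swapInv K N j k) (a : S) :
    algebraMap S (Rp K N) a ∈ Subring.closure
      ({(X k : Rp K N)} ∪ (Set.range (algebraMap S (Rp K N)) ∩ Set.range (algebraMap T (Rp K N)))) := by
  obtain ⟨f, hf⟩ := a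
  change f ∈ _
  have hx : (X k : Rp K N) ∈ Subring.closure
      ({(X k : Rp K N)} ∪ (Set.range (algebraMap S (Rp K N)) ∩ Set.range (algebraMap T (Rp K N)))) :=
    Subring.subset_closure (Or.inl rfl)
  have hb : ∀ g : Rp K N, g ∈ swapInv K N i j → g ∈ swapInv K N j k → g ∈ Subring.closure
      ({(X k : Rp K N)} ∪ (Set.range (algebraMap S (Rp K N)) ∩ Set.range (algebraMap T (Rp K N)))) := by
    intro g h1 h2
    exact Subring.subset_closure (Or.inr ⟨⟨⟨g, hS ▸ h1⟩, rfl⟩, ⟨⟨g, hT ▸ h2⟩, rfl⟩⟩)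
  rw [hS, inv_eq hij, Tinv] at hf
  have he1 := hb (X i + X j + X k) (add_mem (s_mem i j) (x_mem hik.symm hjk.symm))
    (by rw [add_assoc]; exact add_mem (x_mem hij hik) (s_mem j k))
  have he2 := hb (X i * X j + (X i + X j) * X k)
    (add_mem (p_mem i j) (mul_mem (s_mem i j) (x_mem hik.symm hjk.symm)))
    (by
      have := add_mem (mul_mem (x_mem (K := K) hij hik) (s_mem j k)) (p_mem j k)
      convert this using 1
      ring)
  generalize Subring.closure
      ({(X k : Rp K N)} ∪ (Set.range (algebraMap S (Rp K N)) ∩ Set.range (algebraMap T (Rp K N)))) = Q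
      at *
  induction hf using Algebra.adjoin_induction with
  | algebraMap r => exact hb _ (Subalgebra.algebraMap_mem _ r) (Subalgebra.algebraMap_mem _ r)
  | add x y _ _ hx hy => exact add_mem hx hy
  | mul x y _ _ hx hy => exact mul_mem hx hy
  | mem f hf =>
    rcases hf with (rfl | rfl) | ⟨l, h1, h2, rfl⟩
    · have := sub_mem he1 hx
      convert this using 1
      ring
    · have := sub_mem he2 (mul_mem hx (sub_mem he1 hx))
      convert this using 1
      ring
    · by_cases h3 : l = k
      · rw [h3]; exact hx
      · exact hb _ (x_mem h1 h2) (x_mem h2 h3)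

theorem hyp {i j k : Fin N} (hij : i ≠ j) (hik : i ≠ k) (hjk : j ≠ k) :
    Nonempty (Hyp (Rp K N) ↥(swapInv K N i j) ↥(swapInv K N j k) (X i) (X j) (X k)) := by
  obtain ⟨c, d, h, h1, h2, h3, h4⟩ := dec (K := K) hij _ rfl
  obtain ⟨c', d', h', h1', h2', h3', h4'⟩ := dec (K := K) hjk.symm _ (swapInv_comm j k)
  exact ⟨{
    cA := c
    dA := d
    decA := h
    cA1 := h1
    dA1 := h2
    cAx := h3
    dAx := h4
    cB := c'
    dB := d'
    decB := h'
    cB1 := h1'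
    dB1 := h2'
    cBx := h3'
    dBx := h4'
    sA := ⟨_, s_mem i j⟩
    sA_eq := rfl
    pA := ⟨_, p_mem i j⟩
    pA_eq := rfl
    xA := ⟨_, x_mem hik.symm hjk.symm⟩
    xA_eq := rfl
    sB := ⟨_, s_mem j k⟩
    sB_eq := add_comm _ _
    pB := ⟨_, p_mem j k⟩
    pB_eq := mul_comm _ _
    xB := ⟨_, x_mem hij hik⟩
    xB_eq := rfl
    gA := gens hij hik hjk _ _ rfl rfl
    gB := gens hjk.symm hik.symm hij.symm _ _ (swapInv_comm _ _) (swapInv_comm _ _) }⟩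

end conc
end Rouq
end

/-- fix `1 ≤ i ≤ N-2` (below `i' = i+1` and `i'' = i+2`, so that
`s = s_i` and `t = s_{i+1}`).  Realize the triple tensor product complexes of
`R`-bimodules as the four-term complexes (degrees 3, 2, 1, 0)
`F_i ⊗_R F_{i+1} ⊗_R F_i = (B_sB_tB_s --δ₃--> B_sB_t × B_sB_s × B_tB_s
  --δ₂--> B_s × B_t × B_s --δ₁--> R)` and
`F_{i+1} ⊗_R F_i ⊗_R F_{i+1} = (B_tB_sB_t --ε₃--> B_tB_s × B_tB_t × B_sB_t
  --ε₂--> B_t × B_s × B_t --ε₁--> R)`,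
with the Koszul-sign differentials (uniquely) pinned down by the formulas
below.  Then both are complexes, and they are homotopy equivalent as complexes
of `R`-bimodules: there are chain maps `u`, `v` in both directions and chain
homotopies `h`, `k` from `v ∘ u` and `u ∘ v` to the identities. -/
theorem rouquier_complexes_satisfy_braid_relation
    (K : Type) [Field K] [CharZero K] (N : ℕ) (i i' i'' : Fin N)
    (hadj : i.val + 1 = i'.val) (hadj' : i'.val + 1 = i''.val)
    -- differentials of `X = F_i ⊗ F_{i+1} ⊗ F_i`:
    (δ₃ : Bq3 K N i i' i' i'' i i' →ₗ[SE K N]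
      Bq2 K N i i' i' i'' × Bq2 K N i i' i i' × Bq2 K N i' i'' i i')
    (hδ₃ : ∀ x y z w : Rp K N,
      δ₃ (x ⊗ₜ (y ⊗ₜ (z ⊗ₜ w))) =
        (x ⊗ₜ (y ⊗ₜ (z * w)), -(x ⊗ₜ ((y * z) ⊗ₜ w)), (x * y) ⊗ₜ (z ⊗ₜ w)))
    (δ₂ : Bq2 K N i i' i' i'' × Bq2 K N i i' i i' × Bq2 K N i' i'' i i' →ₗ[SE K N]
      Bq K N i i' × Bq K N i' i'' × Bq K N i i')
    (hδ₂a : ∀ x y z : Rp K N,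
      δ₂ (x ⊗ₜ (y ⊗ₜ z), 0, 0) = (-(x ⊗ₜ (y * z)), (x * y) ⊗ₜ z, 0))
    (hδ₂b : ∀ x y z : Rp K N,
      δ₂ (0, x ⊗ₜ (y ⊗ₜ z), 0) = (-(x ⊗ₜ (y * z)), 0, (x * y) ⊗ₜ z))
    (hδ₂c : ∀ x y z : Rp K N,
      δ₂ (0, 0, x ⊗ₜ (y ⊗ₜ z)) = (0, -(x ⊗ₜ (y * z)), (x * y) ⊗ₜ z))
    (δ₁ : Bq K N i i' × Bq K N i' i'' × Bq K N i i' →ₗ[SE K N] Rp K N)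
    (hδ₁ : ∀ x y z w p q : Rp K N,
      δ₁ (x ⊗ₜ y, z ⊗ₜ w, p ⊗ₜ q) = x * y + z * w + p * q)
    -- differentials of `Y = F_{i+1} ⊗ F_i ⊗ F_{i+1}`:
    (ε₃ : Bq3 K N i' i'' i i' i' i'' →ₗ[SE K N]
      Bq2 K N i' i'' i i' × Bq2 K N i' i'' i' i'' × Bq2 K N i i' i' i'')
    (hε₃ : ∀ x y z w : Rp K N,
      ε₃ (x ⊗ₜ (y ⊗ₜ (z ⊗ₜ w))) =
        (x ⊗ₜ (y ⊗ₜ (z * w)), -(x ⊗ₜ ((y * z) ⊗ₜ w)), (x * y) ⊗ₜ (z ⊗ₜ w)))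
    (ε₂ : Bq2 K N i' i'' i i' × Bq2 K N i' i'' i' i'' × Bq2 K N i i' i' i'' →ₗ[SE K N]
      Bq K N i' i'' × Bq K N i i' × Bq K N i' i'')
    (hε₂a : ∀ x y z : Rp K N,
      ε₂ (x ⊗ₜ (y ⊗ₜ z), 0, 0) = (-(x ⊗ₜ (y * z)), (x * y) ⊗ₜ z, 0))
    (hε₂b : ∀ x y z : Rp K N,
      ε₂ (0, x ⊗ₜ (y ⊗ₜ z), 0) = (-(x ⊗ₜ (y * z)), 0, (x * y) ⊗ₜ z))
    (hε₂c : ∀ x y z : Rp K N,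
      ε₂ (0, 0, x ⊗ₜ (y ⊗ₜ z)) = (0, -(x ⊗ₜ (y * z)), (x * y) ⊗ₜ z))
    (ε₁ : Bq K N i' i'' × Bq K N i i' × Bq K N i' i'' →ₗ[SE K N] Rp K N)
    (hε₁ : ∀ x y z w p q : Rp K N,
      ε₁ (x ⊗ₜ y, z ⊗ₜ w, p ⊗ₜ q) = x * y + z * w + p * q) :
    -- both are complexes:
    (δ₂ ∘ₗ δ₃ = 0 ∧ δ₁ ∘ₗ δ₂ = 0 ∧ ε₂ ∘ₗ ε₃ = 0 ∧ ε₁ ∘ₗ ε₂ = 0) ∧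
    -- and they are homotopy equivalent as complexes of `R`-bimodules:
    ∃ (u₃ : Bq3 K N i i' i' i'' i i' →ₗ[SE K N] Bq3 K N i' i'' i i' i' i'')
      (u₂ : Bq2 K N i i' i' i'' × Bq2 K N i i' i i' × Bq2 K N i' i'' i i' →ₗ[SE K N]
        Bq2 K N i' i'' i i' × Bq2 K N i' i'' i' i'' × Bq2 K N i i' i' i'')
      (u₁ : Bq K N i i' × Bq K N i' i'' × Bq K N i i' →ₗ[SE K N]
        Bq K N i' i'' × Bq K N i i' × Bq K N i' i'')
      (u₀ : Rp K N →ₗ[SE K N] Rp K N)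
      (v₃ : Bq3 K N i' i'' i i' i' i'' →ₗ[SE K N] Bq3 K N i i' i' i'' i i')
      (v₂ : Bq2 K N i' i'' i i' × Bq2 K N i' i'' i' i'' × Bq2 K N i i' i' i'' →ₗ[SE K N]
        Bq2 K N i i' i' i'' × Bq2 K N i i' i i' × Bq2 K N i' i'' i i')
      (v₁ : Bq K N i' i'' × Bq K N i i' × Bq K N i' i'' →ₗ[SE K N]
        Bq K N i i' × Bq K N i' i'' × Bq K N i i')
      (v₀ : Rp K N →ₗ[SE K N] Rp K N)
      (h₂ : Bq2 K N i i' i' i'' × Bq2 K N i i' i i' × Bq2 K N i' i'' i i' →ₗ[SE K N]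
        Bq3 K N i i' i' i'' i i')
      (h₁ : Bq K N i i' × Bq K N i' i'' × Bq K N i i' →ₗ[SE K N]
        Bq2 K N i i' i' i'' × Bq2 K N i i' i i' × Bq2 K N i' i'' i i')
      (h₀ : Rp K N →ₗ[SE K N] Bq K N i i' × Bq K N i' i'' × Bq K N i i')
      (k₂ : Bq2 K N i' i'' i i' × Bq2 K N i' i'' i' i'' × Bq2 K N i i' i' i'' →ₗ[SE K N]
        Bq3 K N i' i'' i i' i' i'')
      (k₁ : Bq K N i' i'' × Bq K N i i' × Bq K N i' i'' →ₗ[SE K N]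
        Bq2 K N i' i'' i i' × Bq2 K N i' i'' i' i'' × Bq2 K N i i' i' i'')
      (k₀ : Rp K N →ₗ[SE K N] Bq K N i' i'' × Bq K N i i' × Bq K N i' i''),
      -- `u` and `v` are chain maps:
      (u₂ ∘ₗ δ₃ = ε₃ ∘ₗ u₃ ∧ u₁ ∘ₗ δ₂ = ε₂ ∘ₗ u₂ ∧ u₀ ∘ₗ δ₁ = ε₁ ∘ₗ u₁) ∧
      (v₂ ∘ₗ ε₃ = δ₃ ∘ₗ v₃ ∧ v₁ ∘ₗ ε₂ = δ₂ ∘ₗ v₂ ∧ v₀ ∘ₗ ε₁ = δ₁ ∘ₗ v₁) ∧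
      -- `v ∘ u` is homotopic to the identity (via `h`):
      (v₃ ∘ₗ u₃ + h₂ ∘ₗ δ₃ = LinearMap.id ∧
       v₂ ∘ₗ u₂ + δ₃ ∘ₗ h₂ + h₁ ∘ₗ δ₂ = LinearMap.id ∧
       v₁ ∘ₗ u₁ + δ₂ ∘ₗ h₁ + h₀ ∘ₗ δ₁ = LinearMap.id ∧
       v₀ ∘ₗ u₀ + δ₁ ∘ₗ h₀ = LinearMap.id) ∧
      -- `u ∘ v` is homotopic to the identity (via `k`):
      (u₃ ∘ₗ v₃ + k₂ ∘ₗ ε₃ = LinearMap.id ∧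
       u₂ ∘ₗ v₂ + ε₃ ∘ₗ k₂ + k₁ ∘ₗ ε₂ = LinearMap.id ∧
       u₁ ∘ₗ v₁ + ε₂ ∘ₗ k₁ + k₀ ∘ₗ ε₁ = LinearMap.id ∧
       u₀ ∘ₗ v₀ + ε₁ ∘ₗ k₀ = LinearMap.id) := by
  obtain ⟨H⟩ := Rouq.hyp (K := K) (i := i) (j := i') (k := i'')
    (by intro e; rw [e] at hadj; omega) (by intro e; rw [e] at hadj; omega)
    (by intro e; rw [e] at hadj'; omega)
  have D : Rouq.Dif K δ₃ δ₂ δ₁ := ⟨hδ₃, hδ₂a, hδ₂b, hδ₂c, hδ₁⟩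
  have E : Rouq.Dif K ε₃ ε₂ ε₁ := ⟨hε₃, hε₂a, hε₂b, hε₂c, hε₁⟩
  obtain ⟨⟨a1, a2⟩, ac, ah1, ah2, ah3⟩ := Rouq.halfH H D E
  obtain ⟨⟨b1, b2⟩, bc, bh1, bh2, bh3⟩ := Rouq.halfH H.swap E D
  refine ⟨⟨a1, a2, b1, b2⟩, Rouq.U3 K H, Rouq.U2 K H, Rouq.U1 K _ _ _, LinearMap.id,
    Rouq.U3 K H.swap, Rouq.U2 K H.swap, Rouq.U1 K _ _ _, LinearMap.id,
    Rouq.Ho2 K H, Rouq.Ho1 K H, 0, Rouq.Ho2 K H.swap, Rouq.Ho1 K H.swap, 0,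
    ac, bc, ⟨ah1, ah2, ah3, ?_⟩, ⟨bh1, bh2, bh3, ?_⟩⟩
  · rw [LinearMap.comp_zero, add_zero, LinearMap.comp_id]
  · rw [LinearMap.comp_zero, add_zero, LinearMap.comp_id]
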